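/- Fix m ∈ (−1,1) and ρ ∈ (0,1), and suppose Assumption 1 holds. Let ã ∈ (0,ς) and λ̃ > 0 be the solutions of G*(ã) = ρ(log 2 − log(1+|m|)) and G'(λ̃) = ã. Then there exists a sequence of measurable functions A_n : ℝ^ℕ → ℝ (depending only on h) such that for every bounded continuous nonnegative function f : ℝ → ℝ with compact support, E_h[ E_U[ exp( −Σ_{τ∈{−1,1}^n} f(H_n(h,τ) − A_n(h)) · 1{U_τ ≤ Q^{(nρ)}([τ])} ) ] ] → exp( −∫_ℝ (1 − e^{−f(x)}) e^{−λ̃ x} dx ) as n → ∞, where (U_τ)_{τ∈{−1,1}^n} are i.i.d. uniform random variables on [0,1] independent of h. (This is the convergence of the Laplace functionals of the thinned point process of energy levels H_n to those of a Poisson point process with intensity measure e^{−λ̃x}dx, i.e., REM universality.) -/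

import Mathlib

open MeasureTheory ProbabilityTheory Real Filter Set
open scoped ENNReal Topology BigOperators

noncomputable section

/-- Assumption 1 of the paper, phrased for the law `μ` of `h₁`. -/
structure Assumption1 (μ : Measure ℝ) : Prop where
  isProb : IsProbabilityMeasure μ
  acPart : ¬ μ.MutuallySingular (volume : Measure ℝ)
  smallBall : ∃ ε > (0:ℝ), ∃ p₁ > (0:ℝ), ∀ t ∈ Set.Ico (0:ℝ) ε,
    (μ {x : ℝ | |x| < t}).toReal ≤ p₁ * t
  densityLB : ∃ c d p₂ : ℝ, c < d ∧ 0 < p₂ ∧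
    ∀ s : Set ℝ, s ⊆ Set.Icc c d → MeasurableSet s →
      ENNReal.ofReal p₂ * volume s ≤ μ s
  intAbs : Integrable (fun x : ℝ => |x|) μ
  intSq : Integrable (fun x : ℝ => x ^ 2) μ
  intCube : Integrable (fun x : ℝ => |x| ^ 3) μ

/-- `g(λ) = log(((1+m)/2)e^{λ(1−m)} + ((1−m)/2)e^{−λ(1+m)})`. -/
def gfun (m lam : ℝ) : ℝ :=
  Real.log ((1 + m) / 2 * Real.exp (lam * (1 - m)) + (1 - m) / 2 * Real.exp (-(lam * (1 + m))))

/-- `G(λ) = E[g(λ h₁)]`. -/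
def Gf (μ : Measure ℝ) (m lam : ℝ) : ℝ := ∫ x, gfun m (lam * x) ∂μ

/-- `G*(a) = sup_{λ∈ℝ}(λa − G(λ))`. -/
def Gstar (μ : Measure ℝ) (m a : ℝ) : ℝ := ⨆ lam : ℝ, (lam * a - Gf μ m lam)

/-- `ς = −m ψ₁ + ψ₃`. -/
def sigmaBar (μ : Measure ℝ) (m : ℝ) : ℝ := -m * ∫ x, x ∂μ + ∫ x, |x| ∂μ

/-- The spin value attached to a Boolean: `true ↦ 1`, `false ↦ -1`. -/
def spin (b : Bool) : ℝ := if b then 1 else -1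

/-- `H_n(h,τ) = Σ_{i=1}^n h_i (τ_i − m)`. -/
def Hn (m : ℝ) (n : ℕ) (hs : ℕ → ℝ) (τ : Fin n → Bool) : ℝ :=
  ∑ i : Fin n, hs i * (spin (τ i) - m)

/-- `Q^{(nρ)}([τ]) = e^{nρ(log 2 − log(1+|m|))} ∏_{i=1}^n (1+mτ_i)/2`. -/
def Qw (m ρ : ℝ) (n : ℕ) (τ : Fin n → Bool) : ℝ :=
  Real.exp (n * ρ * (Real.log 2 - Real.log (1 + |m|))) * ∏ i : Fin n, (1 + m * spin (τ i)) / 2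

/-- The joint law of the i.i.d. uniform random variables `(U_τ)_{τ ∈ {−1,1}^n}`. -/
def Unif (n : ℕ) : Measure ((Fin n → Bool) → ℝ) :=
  Measure.pi fun _ => (volume : Measure ℝ).restrict (Set.Icc 0 1)

/-!
The conditional Laplace functional given `h` is `∏ τ, (1 - Q τ * φ (H τ - A))` with
`φ = 1 - exp (-f)`, and since every `Q τ` is exponentially small it is close to `exp (-S)`, where
`S = ∑ τ, Q τ * φ (H τ - A)`. Tilting the spins by `λ̃` turns `S` into a prefactor times the
quenched expectation of `ψ (H - A)`, where `ψ x = φ x * exp (-λ̃ x)`. A local central limit theorem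
for the tilted energy, in `L¹` with respect to `h` and uniform in the `h`-dependent level `A`, shows
that this expectation is a Gaussian density times `∫ ψ`. The local limit theorem follows from
Fourier inversion: the squared modulus of the quenched characteristic function averages to a product
over the sites, which a density of `h` on an interval makes small away from the origin.
The saddle point equations centre the sum of i.i.d. variables measuring the distance of the required
level from the tilted mean, so this distance is of order `√n`; there `A` can be chosen such that
prefactor and density cancel asymptotically, and `S → ∫ ψ` in probability.
-/

/-! ### The exponentially tilted spin -/

/-- The probability that a spin of mean `m` equals `1` after exponential tilting with parameter `y`,
i.e. under the law with density `exp (y * (σ - m) - gfun m y)`. -/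
def tiltProb (m y : ℝ) : ℝ := (1 + m) / 2 * exp (y * (1 - m) - gfun m y)

section Tilt

variable {m : ℝ}

theorem partitionFun_pos (hm : m ∈ Ioo (-1) 1) (y : ℝ) :
    0 < (1 + m) / 2 * exp (y * (1 - m)) + (1 - m) / 2 * exp (-(y * (1 + m))) := by
  have h_add : 0 < 1 + m := by linarith [hm.1]
  have h_sub : 0 < 1 - m := by linarith [hm.2]
  positivity

theorem exp_gfun (hm : m ∈ Ioo (-1) 1) (y : ℝ) :
    exp (gfun m y) =
      (1 + m) / 2 * exp (y * (1 - m)) + (1 - m) / 2 * exp (-(y * (1 + m))) :=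
  exp_log (partitionFun_pos hm y)

theorem one_sub_tiltProb (hm : m ∈ Ioo (-1) 1) (y : ℝ) :
    1 - tiltProb m y = (1 - m) / 2 * exp (-(y * (1 + m)) - gfun m y) := by
  rw [tiltProb, exp_sub, exp_sub, sub_eq_iff_eq_add, ← mul_div_assoc, ← mul_div_assoc, ← add_div,
    eq_div_iff (exp_pos _).ne', one_mul, exp_gfun hm, add_comm]

theorem tiltProb_mem_Ioo (hm : m ∈ Ioo (-1) 1) (y : ℝ) : tiltProb m y ∈ Ioo 0 1 := by
  have h_add : 0 < 1 + m := by linarith [hm.1]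
  have h_sub : 0 < 1 - m := by linarith [hm.2]
  refine ⟨by unfold tiltProb; positivity, sub_pos.1 ?_⟩
  rw [one_sub_tiltProb hm]
  positivity

theorem continuous_gfun (hm : m ∈ Ioo (-1) 1) : Continuous (gfun m) :=
  Continuous.log (by fun_prop) fun y => (partitionFun_pos hm y).ne'

theorem continuous_tiltProb (hm : m ∈ Ioo (-1) 1) : Continuous (tiltProb m) := by
  have := continuous_gfun hm
  unfold tiltProb
  fun_prop

theorem hasDerivAt_gfun (hm : m ∈ Ioo (-1) 1) (y : ℝ) :
    HasDerivAt (gfun m) (2 * tiltProb m y - 1 - m) y := by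
  have h_up : HasDerivAt (fun y => exp (y * (1 - m))) (exp (y * (1 - m)) * (1 - m)) y := by
    simpa using ((hasDerivAt_id y).mul_const (1 - m)).exp
  have h_down : HasDerivAt (fun y => exp (-(y * (1 + m)))) (exp (-(y * (1 + m))) * -(1 + m)) y := by
    simpa using ((hasDerivAt_id y).mul_const (1 + m)).neg.exp
  refine (((h_up.const_mul ((1 + m) / 2)).add (h_down.const_mul ((1 - m) / 2))).log
    (partitionFun_pos hm y).ne').congr_deriv ?_
  simp only [Pi.add_apply, ← exp_gfun hm]
  have h_mean : 2 * tiltProb m y - 1 - m =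
      tiltProb m y * (1 - m) + (1 - tiltProb m y) * -(1 + m) := by ring
  rw [h_mean, one_sub_tiltProb hm, tiltProb, exp_sub, exp_sub]
  ring

theorem gfun_zero (m : ℝ) : gfun m 0 = 0 := by
  have h_sum : (1 + m) / 2 * 1 + (1 - m) / 2 * 1 = 1 := by ring
  rw [gfun, zero_mul, zero_mul, neg_zero, exp_zero, h_sum, log_one]

theorem tiltProb_zero (m : ℝ) : tiltProb m 0 = (1 + m) / 2 := by
  rw [tiltProb, gfun_zero, zero_mul, sub_zero, exp_zero, mul_one]

theorem exp_gfun_sub_gfun (hm : m ∈ Ioo (-1) 1) (y z : ℝ) :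
    exp (gfun m y - gfun m z) =
      tiltProb m z * exp ((y - z) * (1 - m)) + (1 - tiltProb m z) * exp (-((y - z) * (1 + m))) := by
  rw [one_sub_tiltProb hm, tiltProb, exp_sub, exp_gfun hm, mul_assoc, mul_assoc, ← exp_add,
    ← exp_add, add_div, mul_div_assoc, mul_div_assoc, ← exp_sub, ← exp_sub]
  ring_nf

/-- Jensen's inequality for `exp` under the law tilted by `z`. -/
theorem gfun_add_le (hm : m ∈ Ioo (-1) 1) (y z : ℝ) :
    gfun m z + (y - z) * (2 * tiltProb m z - 1 - m) ≤ gfun m y := by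
  obtain ⟨h_pos, h_lt⟩ := tiltProb_mem_Ioo hm z
  have h_jensen := convexOn_exp.2 (mem_univ ((y - z) * (1 - m)))
    (mem_univ (-((y - z) * (1 + m)))) h_pos.le (sub_pos.2 h_lt).le (add_sub_cancel _ _)
  simp only [smul_eq_mul, ← exp_gfun_sub_gfun hm, exp_le_exp] at h_jensen
  linarith

theorem abs_two_mul_tiltProb_sub_le (hm : m ∈ Ioo (-1) 1) (y : ℝ) :
    |2 * tiltProb m y - 1 - m| ≤ 2 := by
  obtain ⟨h_pos, h_lt⟩ := tiltProb_mem_Ioo hm y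
  rw [abs_le]
  constructor <;> linarith [hm.1, hm.2]

theorem abs_gfun_le (hm : m ∈ Ioo (-1) 1) (y : ℝ) : |gfun m y| ≤ 2 * |y| := by
  have h_nonneg := gfun_add_le hm y 0
  have h_le := gfun_add_le hm 0 y
  rw [gfun_zero, tiltProb_zero] at h_nonneg
  rw [gfun_zero] at h_le
  rw [abs_of_nonneg (by linarith)]
  calc gfun m y ≤ y * (2 * tiltProb m y - 1 - m) := by linarith
    _ ≤ |y| * |2 * tiltProb m y - 1 - m| := by rw [← abs_mul]; exact le_abs_self _
    _ ≤ |y| * 2 := by gcongr; exact abs_two_mul_tiltProb_sub_le hm y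
    _ = 2 * |y| := mul_comm _ _

end Tilt

/-! ### The characteristic function of a centred two-point law -/

theorem norm_exp_mul_I_sub_le (a : ℝ) :
    ‖Complex.exp (a * Complex.I) - 1 - a * Complex.I‖ ≤ 2 * a ^ 2 := by
  have h_norm : ‖(a : ℂ) * Complex.I‖ = |a| := by simp
  rcases le_total |a| 1 with h | h
  · have := Complex.norm_exp_sub_one_sub_id_le (x := (a : ℂ) * Complex.I) (h_norm.trans_le h)
    rw [h_norm, sq_abs] at this
    nlinarith [sq_nonneg a]
  · have h_exp : ‖Complex.exp (a * Complex.I) - 1‖ ≤ |a| := by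
      simpa [mul_comm] using norm_exp_I_mul_ofReal_sub_one_le (x := a)
    calc ‖Complex.exp (a * Complex.I) - 1 - a * Complex.I‖
        ≤ ‖Complex.exp (a * Complex.I) - 1‖ + ‖(a : ℂ) * Complex.I‖ := norm_sub_le _ _
      _ ≤ |a| + |a| := by rw [h_norm]; gcongr
      _ ≤ 2 * a ^ 2 := by rw [← sq_abs a]; nlinarith

theorem tendsto_const_div_sqrt_natCast (a : ℝ) :
    Tendsto (fun n : ℕ => a / √n) atTop (𝓝 0) :=
  tendsto_const_nhds.div_atTop (tendsto_sqrt_atTop.comp tendsto_natCast_atTop_atTop)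

theorem norm_exp_mul_I_sub_taylor_le (a : ℝ) :
    ‖Complex.exp (a * Complex.I) - 1 - a * Complex.I + a ^ 2 / 2‖ ≤ |a| ^ 3 * exp |a| := by
  have h_norm : ‖(a : ℂ) * Complex.I‖ = |a| := by simp
  have h := Complex.norm_exp_sub_sum_le_norm_mul_exp ((a : ℂ) * Complex.I) 3
  rw [h_norm] at h
  convert h using 2
  simp only [Finset.sum_range_succ, Finset.sum_range_zero, mul_pow, Complex.I_sq, Nat.factorial]
  push_cast
  ring

theorem tendsto_natCast_mul_exp_sub (a : ℝ) :
    Tendsto (fun n : ℕ => (n : ℂ) *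
      (Complex.exp ((a / √n : ℝ) * Complex.I) - 1 - (a / √n : ℝ) * Complex.I)) atTop
      (𝓝 (-(a : ℂ) ^ 2 / 2)) := by
  have h_zero := (tendsto_const_div_sqrt_natCast a).abs
  have h_bound : Tendsto (fun n : ℕ => a ^ 2 * (|a / √n| * exp |a / √n|)) atTop (𝓝 0) := by
    simpa using (h_zero.mul h_zero.rexp).const_mul (a ^ 2)
  refine tendsto_iff_norm_sub_tendsto_zero.2 <|
    squeeze_zero' (.of_forall fun n => norm_nonneg _) ?_ h_bound
  filter_upwards [eventually_ge_atTop 1] with n hn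
  have hn_pos : (0 : ℝ) < n := by exact_mod_cast hn
  have h_sq : (n : ℝ) * (a / √n) ^ 2 = a ^ 2 := by
    rw [div_pow, sq_sqrt hn_pos.le]
    field_simp
  have h_sq_complex : (n : ℂ) * ((a / √n : ℝ) : ℂ) ^ 2 = (a : ℂ) ^ 2 := by exact_mod_cast h_sq
  generalize a / √n = b at *
  have h_taylor : (n : ℂ) * (Complex.exp (b * Complex.I) - 1 - b * Complex.I) - -(a : ℂ) ^ 2 / 2 =
      n * (Complex.exp (b * Complex.I) - 1 - b * Complex.I + b ^ 2 / 2) := by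
    linear_combination -(1 / 2 : ℂ) * h_sq_complex
  rw [h_taylor, norm_mul, Complex.norm_natCast, ← h_sq, ← sq_abs b]
  calc (n : ℝ) * ‖Complex.exp (b * Complex.I) - 1 - b * Complex.I + b ^ 2 / 2‖
      ≤ n * (|b| ^ 3 * exp |b|) := by gcongr; exact norm_exp_mul_I_sub_taylor_le b
    _ = n * |b| ^ 2 * (|b| * exp |b|) := by ring

/-- The characteristic function at `θ` of a Bernoulli variable of parameter `p` minus its mean. -/
def bernoulliCharFun (p θ : ℝ) : ℂ :=
  p * Complex.exp ((θ * (1 - p) : ℝ) * Complex.I) +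
    (1 - p : ℝ) * Complex.exp ((-(θ * p) : ℝ) * Complex.I)

section BernoulliCharFun

variable {p : ℝ}

theorem bernoulliCharFun_eq_exp_mul (p θ : ℝ) :
    bernoulliCharFun p θ = Complex.exp ((-(θ * p) : ℝ) * Complex.I) *
      (p * Complex.exp (θ * Complex.I) + (1 - p : ℝ)) := by
  have h_exp : Complex.exp ((θ * (1 - p) : ℝ) * Complex.I) =
      Complex.exp ((-(θ * p) : ℝ) * Complex.I) * Complex.exp (θ * Complex.I) := by
    rw [← Complex.exp_add]
    push_cast
    ring_nf
  rw [bernoulliCharFun, h_exp]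
  ring

theorem norm_bernoulliCharFun_sq (p θ : ℝ) :
    ‖bernoulliCharFun p θ‖ ^ 2 = 1 - 4 * (p * (1 - p)) * sin (θ / 2) ^ 2 := by
  rw [bernoulliCharFun_eq_exp_mul, norm_mul, Complex.norm_exp_ofReal_mul_I, one_mul,
    ← Complex.normSq_eq_norm_sq, Complex.normSq_apply]
  simp only [Complex.add_re, Complex.add_im, Complex.re_ofReal_mul, Complex.im_ofReal_mul,
    Complex.exp_ofReal_mul_I_re, Complex.exp_ofReal_mul_I_im, Complex.ofReal_re, Complex.ofReal_im]
  rw [sin_sq_eq_half_sub, mul_div_cancel₀ θ two_ne_zero]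
  linear_combination p ^ 2 * sin_sq_add_cos_sq θ

theorem norm_bernoulliCharFun_le (p θ : ℝ) :
    ‖bernoulliCharFun p θ‖ ≤ 1 - 2 * (p * (1 - p)) * sin (θ / 2) ^ 2 := by
  linarith [norm_bernoulliCharFun_sq p θ, sq_nonneg (‖bernoulliCharFun p θ‖ - 1)]

theorem norm_bernoulliCharFun_le_one (hp : p ∈ Icc 0 1) (θ : ℝ) :
    ‖bernoulliCharFun p θ‖ ≤ 1 := by
  have := mul_nonneg hp.1 (sub_nonneg.2 hp.2)
  refine (norm_bernoulliCharFun_le p θ).trans (sub_le_self _ (by positivity))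

theorem bernoulliCharFun_sub_one (p θ : ℝ) :
    bernoulliCharFun p θ - 1 =
      p * (Complex.exp ((θ * (1 - p) : ℝ) * Complex.I) - 1 - (θ * (1 - p) : ℝ) * Complex.I) +
      (1 - p : ℝ) * (Complex.exp ((-(θ * p) : ℝ) * Complex.I) - 1 -
        (-(θ * p) : ℝ) * Complex.I) := by
  rw [bernoulliCharFun]
  push_cast
  ring

theorem norm_bernoulliCharFun_sub_one_le (hp : p ∈ Icc 0 1) (θ : ℝ) :
    ‖bernoulliCharFun p θ - 1‖ ≤ 2 * θ ^ 2 := by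
  obtain ⟨hp_nonneg, hp_le⟩ := hp
  have hq_nonneg : 0 ≤ 1 - p := sub_nonneg.2 hp_le
  have h_up := norm_exp_mul_I_sub_le (θ * (1 - p))
  have h_down := norm_exp_mul_I_sub_le (-(θ * p))
  rw [bernoulliCharFun_sub_one]
  refine (norm_add_le _ _).trans ?_
  rw [norm_mul, norm_mul, Complex.norm_of_nonneg hp_nonneg, Complex.norm_of_nonneg hq_nonneg]
  calc _ ≤ p * (2 * (θ * (1 - p)) ^ 2) + (1 - p) * (2 * (-(θ * p)) ^ 2) := by gcongr
    _ = p * (1 - p) * (2 * θ ^ 2) := by ring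
    _ ≤ 1 * (2 * θ ^ 2) := by gcongr; nlinarith
    _ = 2 * θ ^ 2 := one_mul _

theorem tendsto_natCast_mul_bernoulliCharFun_sub_one (p θ : ℝ) :
    Tendsto (fun n : ℕ => (n : ℂ) * (bernoulliCharFun p (θ / √n) - 1)) atTop
      (𝓝 (-(p * (1 - p) * θ ^ 2 / 2) : ℝ)) := by
  have h_up := (tendsto_natCast_mul_exp_sub (θ * (1 - p))).const_mul (p : ℂ)
  have h_down := (tendsto_natCast_mul_exp_sub (-(θ * p))).const_mul ((1 - p : ℝ) : ℂ)
  refine ((h_up.add h_down).congr fun n => ?_).trans_eq ?_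
  · rw [bernoulliCharFun_sub_one, mul_div_right_comm, neg_div, mul_div_right_comm]
    ring
  · push_cast
    ring_nf

theorem tendsto_natCast_mul_norm_bernoulliCharFun_sq_sub_one (p θ : ℝ) :
    Tendsto (fun n : ℕ => (n : ℝ) * (‖bernoulliCharFun p (θ / √n)‖ ^ 2 - 1)) atTop
      (𝓝 (-(p * (1 - p) * θ ^ 2))) := by
  have h_sinc : Tendsto (fun n : ℕ => sinc (θ / 2 / √n) ^ 2) atTop (𝓝 1) := by
    simpa using ((continuous_sinc.tendsto 0).comp (tendsto_const_div_sqrt_natCast (θ / 2))).pow 2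
  refine (Tendsto.congr' ?_ (h_sinc.const_mul (-(p * (1 - p) * θ ^ 2)))).trans_eq (by ring_nf)
  filter_upwards [eventually_ge_atTop 1] with n hn
  have hn_pos : (0 : ℝ) < n := by exact_mod_cast hn
  rw [norm_bernoulliCharFun_sq, div_right_comm θ (√n) 2]
  rcases eq_or_ne θ 0 with rfl | hθ
  · simp
  · rw [sinc_of_ne_zero (by positivity), div_pow, div_pow, sq_sqrt hn_pos.le]
    field_simp
    ring

theorem abs_norm_bernoulliCharFun_sq_sub_one_le (hp : p ∈ Icc 0 1) (θ : ℝ) :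
    |‖bernoulliCharFun p θ‖ ^ 2 - 1| ≤ θ ^ 2 := by
  have h_var_nonneg := mul_nonneg hp.1 (sub_nonneg.2 hp.2)
  have h_var_le : 4 * (p * (1 - p)) ≤ 1 := by linarith [sq_nonneg (1 - 2 * p)]
  have h_sin : sin (θ / 2) ^ 2 ≤ (θ / 2) ^ 2 := sq_le_sq.2 abs_sin_le_abs
  rw [norm_bernoulliCharFun_sq, sub_sub_cancel_left, abs_neg, abs_of_nonneg (by positivity)]
  calc 4 * (p * (1 - p)) * sin (θ / 2) ^ 2 ≤ 1 * (θ / 2) ^ 2 := by gcongr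
    _ ≤ θ ^ 2 := by linarith [sq_nonneg θ]

end BernoulliCharFun

/-! ### Measures dominating Lebesgue measure on an interval -/

/-- The absolutely continuous part of `μ` has a density bounded below by a positive constant on some
nondegenerate compact interval. -/
def DominatesLebesgueOnIcc (μ : Measure ℝ) : Prop :=
  ∃ c d κ : ℝ, c < d ∧ 0 < κ ∧ ENNReal.ofReal κ • volume.restrict (Icc c d) ≤ μ

theorem Assumption1.dominatesLebesgueOnIcc {μ : Measure ℝ} (hμ : Assumption1 μ) :
    DominatesLebesgueOnIcc μ := by
  obtain ⟨c, d, κ, hcd, hκ, h⟩ := hμ.densityLB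
  refine ⟨c, d, κ, hcd, hκ, Measure.le_iff.2 fun s hs => ?_⟩
  rw [Measure.smul_apply, Measure.restrict_apply hs, smul_eq_mul]
  exact (h _ inter_subset_right (hs.inter measurableSet_Icc)).trans (measure_mono inter_subset_left)

theorem DominatesLebesgueOnIcc.measure_compl_singleton_pos {μ : Measure ℝ}
    (hμ : DominatesLebesgueOnIcc μ) (a : ℝ) : 0 < μ {a}ᶜ := by
  obtain ⟨c, d, κ, hcd, hκ, hle⟩ := hμ
  refine lt_of_lt_of_le ?_ (hle {a}ᶜ)
  rw [Measure.smul_apply, Measure.restrict_apply (measurableSet_singleton a).compl, inter_comm,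
    ← sdiff_eq, measure_sdiff_null volume_singleton, Real.volume_Icc]
  exact ENNReal.mul_pos (by simpa using hκ) (by simpa using hcd)

theorem abs_sinc_le (u : ℝ) : |sinc u| ≤ 1 - min 1 (u ^ 2) / 100 := by
  rcases eq_or_ne u 0 with rfl | hu
  · simp
  rcases le_total |u| 2 with h | h
  · have h_abs : |u / 2| ≤ 1 := by rw [abs_div, abs_two]; linarith
    have h_cos_nonneg : 0 ≤ cos (u / 2) := cos_nonneg_of_mem_Icc <| by
      constructor <;> linarith [abs_le.1 h_abs, pi_gt_three]
    have h_double : sinc u = sinc (u / 2) * cos (u / 2) := by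
      rw [sinc_of_ne_zero hu, sinc_of_ne_zero (by positivity), ← mul_div_cancel₀ u two_ne_zero,
        sin_two_mul, mul_div_cancel_left₀ _ two_ne_zero]
      field_simp
    have h_pi : 4 / 100 ≤ 2 / π ^ 2 := by
      rw [div_le_div_iff₀ (by norm_num) (by positivity)]
      nlinarith [pi_lt_four, pi_pos]
    calc |sinc u| ≤ 1 * cos (u / 2) := by
          rw [h_double, abs_mul, abs_of_nonneg h_cos_nonneg]
          gcongr
          exact abs_sinc_le_one _
      _ ≤ 1 - 2 / π ^ 2 * (u / 2) ^ 2 := by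
          rw [one_mul]
          exact cos_le_one_sub_mul_cos_sq (h_abs.trans (by linarith [pi_gt_three]))
      _ ≤ 1 - 4 / 100 * (u / 2) ^ 2 := by gcongr
      _ ≤ 1 - min 1 (u ^ 2) / 100 := by linarith [min_le_right 1 (u ^ 2)]
  · have h_inv : |sinc u| ≤ 1 / 2 := by
      rw [sinc_of_ne_zero hu, abs_div]
      exact div_le_div₀ zero_le_one (abs_sin_le_one u) two_pos h
    linarith [min_le_left 1 (u ^ 2)]

theorem integral_sin_mul_sq (c d t : ℝ) :
    ∫ x in c..d, sin (t * x) ^ 2 =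
      (d - c) / 2 * (1 - sinc (t * (d - c)) * cos (t * (d + c))) := by
  rcases eq_or_ne t 0 with rfl | ht
  · simp
  rcases eq_or_ne (d - c) 0 with hdc | hdc
  · simp [sub_eq_zero.1 hdc]
  have h_prod : sin (t * c) * cos (t * c) - sin (t * d) * cos (t * d) =
      -(sin (t * (d - c)) * cos (t * (d + c))) := by
    rw [mul_sub, mul_add, sin_sub, cos_add]
    linear_combination (-sin (t * c) * cos (t * c)) * sin_sq_add_cos_sq (t * d) +
      (sin (t * d) * cos (t * d)) * sin_sq_add_cos_sq (t * c)
  rw [intervalIntegral.integral_comp_mul_left (fun y => sin y ^ 2) ht, integral_sin_sq, h_prod,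
    smul_eq_mul, sinc_of_ne_zero (mul_ne_zero ht hdc)]
  field_simp
  ring

theorem le_integral_sin_mul_sq {c d : ℝ} (hcd : c < d) (t : ℝ) :
    (d - c) / 200 * min 1 ((d - c) ^ 2) * min 1 (t ^ 2) ≤ ∫ x in c..d, sin (t * x) ^ 2 := by
  have h_min : min 1 ((d - c) ^ 2) * min 1 (t ^ 2) ≤ min 1 ((t * (d - c)) ^ 2) := by
    refine le_min (mul_le_one₀ (min_le_left _ _) (by positivity) (min_le_left _ _)) ?_
    rw [mul_pow, mul_comm (t ^ 2)]
    gcongr <;> exact min_le_right _ _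
  have h_sinc : sinc (t * (d - c)) * cos (t * (d + c)) ≤ |sinc (t * (d - c))| :=
    calc sinc (t * (d - c)) * cos (t * (d + c))
        ≤ |sinc (t * (d - c))| * |cos (t * (d + c))| := by rw [← abs_mul]; exact le_abs_self _
      _ ≤ |sinc (t * (d - c))| := mul_le_of_le_one_right (abs_nonneg _) (abs_cos_le_one _)
  have : 0 ≤ (d - c) / 2 := by linarith
  rw [integral_sin_mul_sq]
  calc (d - c) / 200 * min 1 ((d - c) ^ 2) * min 1 (t ^ 2)
      = (d - c) / 2 * (min 1 ((d - c) ^ 2) * min 1 (t ^ 2) / 100) := by ring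
    _ ≤ (d - c) / 2 * (1 - sinc (t * (d - c)) * cos (t * (d + c))) := by
      gcongr
      linarith [abs_sinc_le (t * (d - c))]

theorem DominatesLebesgueOnIcc.exists_le_integral_mul_sin_sq {μ : Measure ℝ}
    (hμ : DominatesLebesgueOnIcc μ) {w : ℝ → ℝ} (hw_cont : Continuous w) (hw_pos : ∀ x, 0 < w x)
    (hw_int : Integrable w μ) :
    ∃ C > 0, ∀ t, C * min 1 (t ^ 2) ≤ ∫ x, w x * sin (t * x) ^ 2 ∂μ := by
  obtain ⟨c, d, κ, hcd, hκ, hle⟩ := hμ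
  obtain ⟨x₀, _, h_min⟩ :=
    isCompact_Icc.exists_isMinOn (nonempty_Icc.2 hcd.le) hw_cont.continuousOn
  have : 0 < d - c := sub_pos.2 hcd
  have hx₀_pos := hw_pos x₀
  have h_int (t : ℝ) : Integrable (fun x => w x * sin (t * x) ^ 2) μ := by
    refine hw_int.mono (by fun_prop) (.of_forall fun x => ?_)
    rw [norm_mul, norm_pow, norm_eq_abs (sin _)]
    exact mul_le_of_le_one_right (norm_nonneg _) (pow_le_one₀ (abs_nonneg _) (abs_sin_le_one _))
  refine ⟨κ * (w x₀ * ((d - c) / 200 * min 1 ((d - c) ^ 2))), by positivity, fun t => ?_⟩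
  calc κ * (w x₀ * ((d - c) / 200 * min 1 ((d - c) ^ 2))) * min 1 (t ^ 2)
      = κ * (w x₀ * ((d - c) / 200 * min 1 ((d - c) ^ 2) * min 1 (t ^ 2))) := by ring
    _ ≤ κ * (w x₀ * ∫ x in c..d, sin (t * x) ^ 2) := by
      gcongr
      exact le_integral_sin_mul_sq hcd t
    _ = κ * ∫ x in Icc c d, w x₀ * sin (t * x) ^ 2 := by
      rw [integral_const_mul, integral_Icc_eq_integral_Ioc, intervalIntegral.integral_of_le hcd.le]
    _ ≤ κ * ∫ x in Icc c d, w x * sin (t * x) ^ 2 := by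
      gcongr 1
      refine setIntegral_mono_on (Continuous.integrableOn_Icc (by fun_prop))
        (Continuous.integrableOn_Icc (by fun_prop)) measurableSet_Icc fun x hx => ?_
      gcongr
      exact h_min hx
    _ = ∫ x, w x * sin (t * x) ^ 2 ∂(ENNReal.ofReal κ • volume.restrict (Icc c d)) := by
      rw [integral_smul_measure, ENNReal.toReal_ofReal hκ.le, smul_eq_mul]
    _ ≤ ∫ x, w x * sin (t * x) ^ 2 ∂μ :=
      integral_mono_measure hle (.of_forall fun x => mul_nonneg (hw_pos x).le (sq_nonneg _))
        (h_int t)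

/-! ### Products of functions of an i.i.d. sequence -/

/-- `X` is a sequence of independent measurable random variables with common law `μ`. -/
structure IsIID {Ω : Type*} [MeasurableSpace Ω] (P : Measure Ω) (X : ℕ → Ω → ℝ)
    (μ : Measure ℝ) : Prop where
  measurable : ∀ i, Measurable (X i)
  iIndepFun : iIndepFun X P
  map_eq : ∀ i, P.map (X i) = μ

section IID

variable {Ω : Type*} [MeasurableSpace Ω] {P : Measure Ω} {X : ℕ → Ω → ℝ} {μ : Measure ℝ}

theorem IsIID.isProbabilityMeasure [IsProbabilityMeasure P] (hX : IsIID P X μ) :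
    IsProbabilityMeasure μ :=
  hX.map_eq 0 ▸ Measure.isProbabilityMeasure_map (hX.measurable 0).aemeasurable

theorem IsIID.measurable_pi (hX : IsIID P X μ) : Measurable fun ω i => X i ω :=
  measurable_pi_lambda _ hX.measurable

theorem IsIID.integral_comp {E : Type*} [NormedAddCommGroup E] [NormedSpace ℝ E]
    (hX : IsIID P X μ) {F : ℝ → E} (hF : AEStronglyMeasurable F μ) (i : ℕ) :
    ∫ ω, F (X i ω) ∂P = ∫ x, F x ∂μ := by
  rw [← hX.map_eq i] at hF ⊢
  exact (integral_map (hX.measurable i).aemeasurable hF).symm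

theorem IsIID.integral_prod {𝕜 : Type*} [RCLike 𝕜] (hX : IsIID P X μ) {F : ℝ → 𝕜}
    (hF : AEStronglyMeasurable F μ) (n : ℕ) :
    ∫ ω, ∏ i : Fin n, F (X i ω) ∂P = (∫ x, F x ∂μ) ^ n := by
  have h_indep := hX.iIndepFun.precomp (g := fun i : Fin n => (i : ℕ)) Fin.val_injective
  rw [h_indep.integral_fun_prod_comp (f := fun _ => F) (fun i => (hX.measurable i).aemeasurable)
    (fun i => hX.map_eq i ▸ hF)]
  simp only [hX.integral_comp hF, Finset.prod_const, Finset.card_univ, Fintype.card_fin]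

end IID

theorem tendsto_integral_pow_of_dominated {α : Type*} [MeasurableSpace α] {μ : Measure α}
    [IsProbabilityMeasure μ] {F : ℕ → α → ℂ} {w : α → ℂ} {b : α → ℝ}
    (hF : ∀ n, AEStronglyMeasurable (F n) μ) (hb : Integrable b μ)
    (h_le : ∀ n x, n * ‖F n x - 1‖ ≤ b x)
    (h_lim : ∀ x, Tendsto (fun n : ℕ => (n : ℂ) * (F n x - 1)) atTop (𝓝 (w x))) :
    Tendsto (fun n : ℕ => (∫ x, F n x ∂μ) ^ n) atTop (𝓝 (Complex.exp (∫ x, w x ∂μ))) := by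
  have h_meas (n : ℕ) : AEStronglyMeasurable (fun x => (n : ℂ) * (F n x - 1)) μ :=
    ((hF n).sub aestronglyMeasurable_const).const_mul _
  have h_bound (n : ℕ) (x : α) : ‖(n : ℂ) * (F n x - 1)‖ ≤ b x := by
    rw [norm_mul, Complex.norm_natCast]
    exact h_le n x
  have h_int : Tendsto (fun n : ℕ => ∫ x, (n : ℂ) * (F n x - 1) ∂μ) atTop (𝓝 (∫ x, w x ∂μ)) :=
    tendsto_integral_of_dominated_convergence b h_meas hb (fun n => .of_forall (h_bound n))
      (.of_forall h_lim)
  have h_mul : Tendsto (fun n : ℕ => (n : ℂ) * (∫ x, F n x ∂μ - 1)) atTop (𝓝 (∫ x, w x ∂μ)) := by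
    refine h_int.congr' ?_
    filter_upwards [eventually_ne_atTop 0] with n hn
    have h_sub : Integrable (fun x => F n x - 1) μ := by
      have := (hb.mono' (h_meas n) (.of_forall (h_bound n))).const_mul (n : ℂ)⁻¹
      simpa [← mul_assoc, inv_mul_cancel₀ (Nat.cast_ne_zero.2 hn : (n : ℂ) ≠ 0)] using this
    have h_F : Integrable (F n) μ := by simpa [sub_eq_add_neg] using h_sub
    rw [integral_const_mul, integral_sub h_F (integrable_const 1)]
    simp
  simpa using Complex.tendsto_one_add_pow_exp_of_tendsto h_mul

theorem sq_integral_norm_le {α E : Type*} [MeasurableSpace α] {μ : Measure α}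
    [IsProbabilityMeasure μ] [NormedAddCommGroup E] {f : α → E} (hf : MemLp f 2 μ) :
    (∫ x, ‖f x‖ ∂μ) ^ 2 ≤ ∫ x, ‖f x‖ ^ 2 ∂μ := by
  have h_var := variance_nonneg (fun x => ‖f x‖) μ
  rw [variance_eq_sub hf.norm] at h_var
  exact sub_nonneg.1 h_var

theorem integral_norm_sub_const_sq {α E : Type*} [MeasurableSpace α] {μ : Measure α}
    [IsProbabilityMeasure μ] [NormedAddCommGroup E] [InnerProductSpace ℝ E] [CompleteSpace E]
    {f : α → E} (hf : MemLp f 2 μ) (c : E) :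
    ∫ x, ‖f x - c‖ ^ 2 ∂μ = ∫ x, ‖f x‖ ^ 2 ∂μ - 2 * inner ℝ c (∫ x, f x ∂μ) + ‖c‖ ^ 2 := by
  have hf_int : Integrable f μ := hf.integrable one_le_two
  have h_inner : Integrable (fun x => 2 * inner ℝ c (f x)) μ := (hf_int.const_inner c).const_mul 2
  have h_norm_sq := hf.integrable_norm_pow two_ne_zero
  simp only [norm_sub_sq_real, real_inner_comm c]
  rw [integral_add (h_norm_sq.sub' h_inner) (integrable_const _), integral_sub h_norm_sq h_inner,
    integral_const_mul, integral_inner hf_int]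
  simp

theorem tendsto_integral_norm_sub_of_tendsto_integral {α E : Type*} [MeasurableSpace α]
    {μ : Measure α} [IsProbabilityMeasure μ] [NormedAddCommGroup E] [InnerProductSpace ℝ E]
    [CompleteSpace E] {Y : ℕ → α → E} {c : E} (hY : ∀ n, MemLp (Y n) 2 μ)
    (h_mean : Tendsto (fun n => ∫ x, Y n x ∂μ) atTop (𝓝 c))
    (h_sq : Tendsto (fun n => ∫ x, ‖Y n x‖ ^ 2 ∂μ) atTop (𝓝 (‖c‖ ^ 2))) :
    Tendsto (fun n => ∫ x, ‖Y n x - c‖ ∂μ) atTop (𝓝 0) := by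
  have h_L2 : Tendsto (fun n => ∫ x, ‖Y n x - c‖ ^ 2 ∂μ) atTop (𝓝 0) := by
    have h_inner : Tendsto (fun n => inner ℝ c (∫ x, Y n x ∂μ)) atTop (𝓝 (inner ℝ c c)) :=
      tendsto_const_nhds.inner h_mean
    refine (((h_sq.sub (h_inner.const_mul 2)).add_const (‖c‖ ^ 2)).congr
      fun n => (integral_norm_sub_const_sq (hY n) c).symm).trans_eq ?_
    rw [real_inner_self_eq_norm_sq]
    ring_nf
  refine squeeze_zero (fun n => integral_nonneg fun x => norm_nonneg _) (fun n => ?_)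
    (by simpa using h_L2.sqrt)
  exact le_sqrt_of_sq_le (sq_integral_norm_le ((hY n).sub (memLp_const c)))

/-! ### The quenched characteristic function -/

/-- Given the fields `x`, let the spins be independent, the `i`-th one being `1` with probability
`p (x i)`. This is the characteristic function at `t` of the centred energy
`∑ i < n, x i * (σ i - 𝔼 σ i)`. -/
def quenchedCharFun (p : ℝ → ℝ) (n : ℕ) (t : ℝ) (x : ℕ → ℝ) : ℂ :=
  ∏ i : Fin n, bernoulliCharFun (p (x i)) (2 * t * x i)

/-- The expected variance of the energy `x * σ` of a single spin, when the field `x` has law `μ` and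
the spin equals `1` with probability `p x`. -/
def quenchedVar (p : ℝ → ℝ) (μ : Measure ℝ) : ℝ := ∫ x, 4 * (p x * (1 - p x)) * x ^ 2 ∂μ

section QuenchedCharFun

variable {p : ℝ → ℝ}

theorem continuous_bernoulliCharFun_comp (hp_cont : Continuous p) :
    Continuous fun z : ℝ × ℝ => bernoulliCharFun (p z.2) (2 * z.1 * z.2) := by
  unfold bernoulliCharFun
  fun_prop

theorem continuous_quenchedCharFun (hp_cont : Continuous p) (n : ℕ) :
    Continuous fun z : ℝ × (ℕ → ℝ) => quenchedCharFun p n z.1 z.2 := by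
  unfold quenchedCharFun bernoulliCharFun
  fun_prop

theorem norm_quenchedCharFun (n : ℕ) (t : ℝ) (x : ℕ → ℝ) :
    ‖quenchedCharFun p n t x‖ = ∏ i : Fin n, ‖bernoulliCharFun (p (x i)) (2 * t * x i)‖ :=
  norm_prod _ _

theorem norm_quenchedCharFun_le_one (hp : ∀ x, p x ∈ Ioo 0 1) (n : ℕ) (t : ℝ) (x : ℕ → ℝ) :
    ‖quenchedCharFun p n t x‖ ≤ 1 := by
  rw [norm_quenchedCharFun]
  exact Finset.prod_le_one (fun _ _ => norm_nonneg _) fun i _ =>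
    norm_bernoulliCharFun_le_one (Ioo_subset_Icc_self (hp _)) _

theorem mul_one_sub_mem_Ioo {q : ℝ} (hq : q ∈ Ioo 0 1) : q * (1 - q) ∈ Ioo 0 1 :=
  ⟨mul_pos hq.1 (sub_pos.2 hq.2), by nlinarith [hq.1, hq.2]⟩

theorem integrable_quenchedVar_integrand {μ : Measure ℝ} (hp_cont : Continuous p)
    (hp : ∀ x, p x ∈ Ioo 0 1) (hμ_sq : Integrable (fun x => x ^ 2) μ) :
    Integrable (fun x => 4 * (p x * (1 - p x)) * x ^ 2) μ := by
  refine (hμ_sq.const_mul 4).mono' (by fun_prop) (.of_forall fun x => ?_)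
  obtain ⟨h_pos, h_lt⟩ := mul_one_sub_mem_Ioo (hp x)
  rw [norm_of_nonneg (by positivity)]
  gcongr
  linarith

theorem quenchedVar_pos {μ : Measure ℝ} (hp_cont : Continuous p) (hp : ∀ x, p x ∈ Ioo 0 1)
    (hμ : DominatesLebesgueOnIcc μ) (hμ_sq : Integrable (fun x => x ^ 2) μ) :
    0 < quenchedVar p μ := by
  have h_pos (x : ℝ) : 0 < p x * (1 - p x) := (mul_one_sub_mem_Ioo (hp x)).1
  have h_nonneg : 0 ≤ fun x => 4 * (p x * (1 - p x)) * x ^ 2 := fun x => by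
    have := h_pos x
    positivity
  refine (integral_pos_iff_support_of_nonneg h_nonneg
    (integrable_quenchedVar_integrand hp_cont hp hμ_sq)).2 ?_
  refine (hμ.measure_compl_singleton_pos 0).trans_le (measure_mono fun x (hx : x ≠ 0) => ?_)
  have := h_pos x
  exact (by positivity : 4 * (p x * (1 - p x)) * x ^ 2 ≠ 0)

theorem DominatesLebesgueOnIcc.exists_integral_norm_bernoulliCharFun_le {μ : Measure ℝ}
    [IsProbabilityMeasure μ] (hμ : DominatesLebesgueOnIcc μ) (hp_cont : Continuous p)
    (hp : ∀ x, p x ∈ Ioo 0 1) :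
    ∃ C > 0, ∀ t, ∫ x, ‖bernoulliCharFun (p x) (2 * t * x)‖ ∂μ ≤ 1 - C * min 1 (t ^ 2) := by
  have h_var (x : ℝ) : 2 * (p x * (1 - p x)) ∈ Ioo 0 2 := by
    obtain ⟨h_pos, h_lt⟩ := mul_one_sub_mem_Ioo (hp x)
    constructor <;> linarith
  have h_var_int : Integrable (fun x => 2 * (p x * (1 - p x))) μ := by
    refine .of_bound (C := 2) (by fun_prop) (.of_forall fun x => ?_)
    rw [norm_of_nonneg (h_var x).1.le]
    exact (h_var x).2.le
  obtain ⟨C, hC, h_le⟩ :=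
    hμ.exists_le_integral_mul_sin_sq (by fun_prop) (fun x => (h_var x).1) h_var_int
  refine ⟨C, hC, fun t => ?_⟩
  have h_sin_int : Integrable (fun x => 2 * (p x * (1 - p x)) * sin (t * x) ^ 2) μ := by
    refine h_var_int.mono (by fun_prop) (.of_forall fun x => ?_)
    rw [norm_mul, norm_pow, norm_eq_abs (sin _)]
    exact mul_le_of_le_one_right (norm_nonneg _) (pow_le_one₀ (abs_nonneg _) (abs_sin_le_one _))
  calc ∫ x, ‖bernoulliCharFun (p x) (2 * t * x)‖ ∂μ
      ≤ ∫ x, (1 - 2 * (p x * (1 - p x)) * sin (t * x) ^ 2) ∂μ := by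
        refine integral_mono_of_nonneg (.of_forall fun x => norm_nonneg _)
          ((integrable_const 1).sub h_sin_int) (.of_forall fun x => ?_)
        simpa only [mul_assoc, mul_div_cancel_left₀ _ (two_ne_zero' ℝ)]
          using norm_bernoulliCharFun_le (p x) (2 * t * x)
    _ = 1 - ∫ x, 2 * (p x * (1 - p x)) * sin (t * x) ^ 2 ∂μ := by
        rw [integral_sub (integrable_const 1) h_sin_int]
        simp
    _ ≤ 1 - C * min 1 (t ^ 2) := sub_le_sub_left (h_le t) 1

theorem natCast_mul_two_mul_div_sqrt_sq_le (n : ℕ) (s x : ℝ) :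
    n * (2 * (s / √n) * x) ^ 2 ≤ 4 * s ^ 2 * x ^ 2 := by
  rcases n.eq_zero_or_pos with rfl | hn
  · simp only [CharP.cast_eq_zero, zero_mul]
    positivity
  · have hn_pos : (0 : ℝ) < n := by exact_mod_cast hn
    rw [mul_pow, mul_pow, div_pow, sq_sqrt hn_pos.le]
    exact (by field_simp; ring : _ = 4 * s ^ 2 * x ^ 2).le

section Limits

variable {μ : Measure ℝ} [IsProbabilityMeasure μ]

theorem tendsto_integral_bernoulliCharFun_pow (hp_cont : Continuous p) (hp : ∀ x, p x ∈ Ioo 0 1)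
    (hμ_sq : Integrable (fun x => x ^ 2) μ) (s : ℝ) :
    Tendsto (fun n : ℕ => (∫ x, bernoulliCharFun (p x) (2 * (s / √n) * x) ∂μ) ^ n) atTop
      (𝓝 (exp (-(quenchedVar p μ * s ^ 2 / 2)) : ℝ)) := by
  have h_cont := continuous_bernoulliCharFun_comp hp_cont
  have h_lim := tendsto_integral_pow_of_dominated
    (F := fun n x => bernoulliCharFun (p x) (2 * (s / √n) * x))
    (w := fun x => ((-(p x * (1 - p x) * (2 * s * x) ^ 2 / 2) : ℝ) : ℂ))
    (fun n => (h_cont.comp (by fun_prop : Continuous fun x => (s / √n, x))).aestronglyMeasurable)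
    (hμ_sq.const_mul (2 * (4 * s ^ 2))) (fun n x => ?_) (fun x => ?_)
  · rw [integral_complex_ofReal] at h_lim
    convert h_lim using 2
    rw [Complex.ofReal_exp, quenchedVar, ← integral_mul_const, ← integral_div, ← integral_neg]
    congr! 4
    ring
  · calc (n : ℝ) * ‖bernoulliCharFun (p x) (2 * (s / √n) * x) - 1‖
        ≤ n * (2 * (2 * (s / √n) * x) ^ 2) := by
          gcongr
          exact norm_bernoulliCharFun_sub_one_le (Ioo_subset_Icc_self (hp x)) _
      _ = 2 * (n * (2 * (s / √n) * x) ^ 2) := by ring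
      _ ≤ 2 * (4 * s ^ 2 * x ^ 2) := by
          gcongr 2 * ?_
          exact natCast_mul_two_mul_div_sqrt_sq_le n s x
      _ = 2 * (4 * s ^ 2) * x ^ 2 := by ring
  · refine (tendsto_natCast_mul_bernoulliCharFun_sub_one (p x) (2 * s * x)).congr fun n => ?_
    congr! 3
    ring

theorem tendsto_integral_norm_bernoulliCharFun_sq_pow (hp_cont : Continuous p)
    (hp : ∀ x, p x ∈ Ioo 0 1) (hμ_sq : Integrable (fun x => x ^ 2) μ) (s : ℝ) :
    Tendsto (fun n : ℕ => (∫ x, ‖bernoulliCharFun (p x) (2 * (s / √n) * x)‖ ^ 2 ∂μ) ^ n) atTop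
      (𝓝 (exp (-(quenchedVar p μ * s ^ 2)))) := by
  have h_cont (n : ℕ) : Continuous fun x => bernoulliCharFun (p x) (2 * (s / √n) * x) :=
    (continuous_bernoulliCharFun_comp hp_cont).comp (by fun_prop : Continuous fun x => (s / √n, x))
  have h_lim := tendsto_integral_pow_of_dominated
    (F := fun n x => ((‖bernoulliCharFun (p x) (2 * (s / √n) * x)‖ ^ 2 : ℝ) : ℂ))
    (w := fun x => ((-(p x * (1 - p x) * (2 * s * x) ^ 2) : ℝ) : ℂ))
    (fun n => (Complex.continuous_ofReal.comp ((h_cont n).norm.pow 2)).aestronglyMeasurable)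
    (hμ_sq.const_mul (4 * s ^ 2))
    (fun n x => ?_) (fun x => ?_)
  · simp only [integral_complex_ofReal] at h_lim
    rw [← Complex.ofReal_exp] at h_lim
    convert (Complex.continuous_re.tendsto _).comp h_lim using 2 with n
    · rw [Function.comp_apply, ← Complex.ofReal_pow, Complex.ofReal_re]
    · rw [Complex.ofReal_re, quenchedVar, ← integral_mul_const, ← integral_neg]
      congr! 4
      ring
  · rw [← Complex.ofReal_one, ← Complex.ofReal_sub, Complex.norm_real]
    refine le_trans ?_ (natCast_mul_two_mul_div_sqrt_sq_le n s x)
    gcongr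
    exact abs_norm_bernoulliCharFun_sq_sub_one_le (Ioo_subset_Icc_self (hp x)) _
  · have h_real := tendsto_natCast_mul_norm_bernoulliCharFun_sq_sub_one (p x) (2 * s * x)
    refine ((Complex.continuous_ofReal.tendsto _).comp h_real).congr fun n => ?_
    rw [Function.comp_apply, mul_div_right_comm, mul_div_assoc]
    push_cast
    rfl

end Limits

section IID

variable {Ω : Type*} [MeasurableSpace Ω] {P : Measure Ω} [IsProbabilityMeasure P] {X : ℕ → Ω → ℝ}
  {μ : Measure ℝ}

theorem IsIID.exists_integral_norm_quenchedCharFun_le (hX : IsIID P X μ)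
    (hμ : DominatesLebesgueOnIcc μ) (hp_cont : Continuous p) (hp : ∀ x, p x ∈ Ioo 0 1) :
    ∃ C > 0, ∀ (n : ℕ) t, ∫ ω, ‖quenchedCharFun p n t fun i => X i ω‖ ∂P ≤
      exp (-(C * (n * min 1 (t ^ 2)))) := by
  have := hX.isProbabilityMeasure
  obtain ⟨C, hC, h_le⟩ := hμ.exists_integral_norm_bernoulliCharFun_le hp_cont hp
  refine ⟨C, hC, fun n t => ?_⟩
  have h_cont : Continuous fun x => ‖bernoulliCharFun (p x) (2 * t * x)‖ :=
    ((continuous_bernoulliCharFun_comp hp_cont).comp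
      (by fun_prop : Continuous fun x : ℝ => (t, x))).norm
  simp only [norm_quenchedCharFun]
  rw [hX.integral_prod h_cont.aestronglyMeasurable n]
  calc (∫ x, ‖bernoulliCharFun (p x) (2 * t * x)‖ ∂μ) ^ n
      ≤ exp (-(C * min 1 (t ^ 2))) ^ n := by
        gcongr
        linarith [h_le t, add_one_le_exp (-(C * min 1 (t ^ 2)))]
    _ = exp (-(C * (n * min 1 (t ^ 2)))) := by rw [← exp_nat_mul]; ring_nf

theorem IsIID.memLp_quenchedCharFun (hX : IsIID P X μ) (hp_cont : Continuous p)
    (hp : ∀ x, p x ∈ Ioo 0 1) (n : ℕ) (t : ℝ)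
    (q : ℝ≥0∞) : MemLp (fun ω => quenchedCharFun p n t fun i => X i ω) q P := by
  refine .of_bound ?_ 1 (.of_forall fun ω => norm_quenchedCharFun_le_one hp n _ _)
  exact ((continuous_quenchedCharFun hp_cont n).measurable.comp
    (measurable_const.prodMk hX.measurable_pi)).aestronglyMeasurable

theorem IsIID.tendsto_integral_norm_quenchedCharFun_sub (hX : IsIID P X μ)
    (hμ_sq : Integrable (fun x => x ^ 2) μ) (hp_cont : Continuous p) (hp : ∀ x, p x ∈ Ioo 0 1)
    (s : ℝ) :
    Tendsto (fun n : ℕ => ∫ ω, ‖quenchedCharFun p n (s / √n) (fun i => X i ω) -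
      (exp (-(quenchedVar p μ * s ^ 2 / 2)) : ℝ)‖ ∂P) atTop (𝓝 0) := by
  have := hX.isProbabilityMeasure
  have h_cont (n : ℕ) : Continuous fun x => bernoulliCharFun (p x) (2 * (s / √n) * x) :=
    (continuous_bernoulliCharFun_comp hp_cont).comp (by fun_prop : Continuous fun x => (s / √n, x))
  refine tendsto_integral_norm_sub_of_tendsto_integral
    (fun n => hX.memLp_quenchedCharFun hp_cont hp n _ 2) ?_ ?_
  · refine (tendsto_integral_bernoulliCharFun_pow hp_cont hp hμ_sq s).congr fun n => ?_
    exact (hX.integral_prod (h_cont n).aestronglyMeasurable n).symm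
  · have h_sq : ‖((exp (-(quenchedVar p μ * s ^ 2 / 2)) : ℝ) : ℂ)‖ ^ 2 =
        exp (-(quenchedVar p μ * s ^ 2)) := by
      rw [Complex.norm_real, norm_of_nonneg (exp_pos _).le, ← exp_nat_mul]
      push_cast
      ring_nf
    rw [h_sq]
    refine (tendsto_integral_norm_bernoulliCharFun_sq_pow hp_cont hp hμ_sq s).congr fun n => ?_
    simp only [norm_quenchedCharFun, ← Finset.prod_pow]
    exact (hX.integral_prod ((h_cont n).norm.pow 2).aestronglyMeasurable n).symm

end IID

end QuenchedCharFun

/-! ### Fourier inversion for the quenched energy -/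

open scoped FourierTransform

/-- The Fourier transform of a real-valued function. -/
def ofRealFourier (g : ℝ → ℝ) : ℝ → ℂ := 𝓕 fun x => (g x : ℂ)

section OfRealFourier

variable {g : ℝ → ℝ}

theorem ofRealFourier_zero (g : ℝ → ℝ) : ofRealFourier g 0 = (∫ x, g x : ℝ) := by
  rw [ofRealFourier, Real.fourier_eq', ← integral_complex_ofReal]
  simp

theorem continuous_ofRealFourier (hg_int : Integrable g) : Continuous (ofRealFourier g) :=
  VectorFourier.fourierIntegral_continuous Real.continuous_fourierChar continuous_inner
    hg_int.ofReal

theorem ofReal_eq_integral_ofRealFourier (hg_cont : Continuous g) (hg_int : Integrable g)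
    (hg_fourier : Integrable (ofRealFourier g)) (x : ℝ) :
    (g x : ℂ) = ∫ t, Complex.exp ((2 * π * t * x : ℝ) * Complex.I) * ofRealFourier g t := by
  have h_inv := congrFun ((Complex.continuous_ofReal.comp hg_cont).fourierInv_fourier_eq
    hg_int.ofReal hg_fourier) x
  rw [Real.fourierInv_eq'] at h_inv
  refine h_inv.symm.trans (integral_congr_ae (.of_forall fun t => ?_))
  simp only [smul_eq_mul, RCLike.inner_apply, conj_trivial, ofRealFourier, mul_comm x t, mul_assoc]
  rfl

theorem exists_norm_ofRealFourier_le (hg_smooth : ContDiff ℝ ((⊤ : ℕ∞) : WithTop ℕ∞) g)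
    (hg_supp : HasCompactSupport g) :
    ∃ K, ∀ t, ‖ofRealFourier g t‖ ≤ K * (1 + t ^ 2)⁻¹ := by
  let S : SchwartzMap ℝ ℂ := (hg_supp.comp_left Complex.ofReal_zero).toSchwartzMap
    (Complex.ofRealCLM.contDiff.comp hg_smooth)
  have h_eq : ofRealFourier g = 𝓕 S := (SchwartzMap.fourier_coe S).symm
  obtain ⟨C₀, -, h₀⟩ := (𝓕 S).decay 0 0
  obtain ⟨C₂, -, h₂⟩ := (𝓕 S).decay 2 0
  refine ⟨C₀ + C₂, fun t => ?_⟩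
  have h₀t := h₀ t
  have h₂t := h₂ t
  simp only [pow_zero, one_mul, norm_iteratedFDeriv_zero, norm_eq_abs, sq_abs] at h₀t h₂t
  rw [h_eq, ← div_eq_mul_inv, le_div_iff₀ (by positivity)]
  linarith

theorem integrable_exp_mul_I_mul {W : ℝ → ℂ} (hW : Integrable W) (b : ℝ) :
    Integrable fun s : ℝ => Complex.exp ((s * b : ℝ) * Complex.I) * W s := by
  refine hW.bdd_mul (c := 1) (Continuous.aestronglyMeasurable (by fun_prop))
    (.of_forall fun s => ?_)
  rw [Complex.norm_exp_ofReal_mul_I]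

theorem integrable_ofReal_exp_neg_mul_sq_div_two {v : ℝ} (hv : 0 < v) :
    Integrable fun s : ℝ => ((exp (-(v * s ^ 2 / 2)) : ℝ) : ℂ) := by
  have h_int := integrable_exp_neg_mul_sq (half_pos hv)
  simp only [neg_mul, div_mul_eq_mul_div] at h_int
  exact h_int.ofReal

theorem integral_exp_mul_I_mul_exp_neg_mul_sq_div_two {v : ℝ} (hv : 0 < v) (b : ℝ) :
    ∫ s : ℝ, Complex.exp ((s * b : ℝ) * Complex.I) * (exp (-(v * s ^ 2 / 2)) : ℝ) =
      (√(2 * π / v) * exp (-(b ^ 2 / (2 * v))) : ℝ) := by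
  have h_sqrt : ((π : ℂ) / ((v / 2 : ℝ) : ℂ)) ^ (1 / 2 : ℂ) = (√(2 * π / v) : ℝ) := by
    rw [sqrt_eq_rpow, Complex.ofReal_cpow (by positivity)]
    push_cast
    congr 1
    field_simp
  have h_gauss := fourierIntegral_gaussian (b := ((v / 2 : ℝ) : ℂ))
    (by rw [Complex.ofReal_re]; positivity) b
  rw [h_sqrt] at h_gauss
  convert h_gauss using 1
  · refine integral_congr_ae (.of_forall fun s => ?_)
    push_cast
    congr 2 <;> ring
  · push_cast
    congr 2
    field_simp
    ring

end OfRealFourier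

/-- The probability of the configuration `τ` when the `i`-th spin is `1` with probability
`p (x i)`, independently over `i`. -/
def spinWeight (p : ℝ → ℝ) (n : ℕ) (x : ℕ → ℝ) (τ : Fin n → Bool) : ℝ :=
  ∏ i : Fin n, if τ i then p (x i) else 1 - p (x i)

/-- The mean of the energy `Hn m n x` under the law `spinWeight p n x`. -/
def quenchedMean (m : ℝ) (p : ℝ → ℝ) (n : ℕ) (x : ℕ → ℝ) : ℝ :=
  ∑ i : Fin n, x i * (2 * p (x i) - 1 - m)

/-- The expectation of `φ (Hn m n x τ)` when `τ` has law `spinWeight p n x`. -/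
def quenchedExpect (m : ℝ) (p : ℝ → ℝ) (n : ℕ) (x : ℕ → ℝ) (φ : ℝ → ℝ) : ℝ :=
  ∑ τ : Fin n → Bool, spinWeight p n x τ * φ (Hn m n x τ)

/-- The error in the local central limit theorem: the difference between the rescaled quenched
expectation of `g (Hn m n x τ - A)` and its Gaussian prediction with variance `n * v`. -/
def lltError (m : ℝ) (p : ℝ → ℝ) (v : ℝ) (n : ℕ) (x : ℕ → ℝ) (A : ℝ) (g : ℝ → ℝ) : ℝ :=
  √(2 * π * n * v) * (quenchedExpect m p n x fun y => g (y - A)) -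
    exp (-((A - quenchedMean m p n x) ^ 2 / (2 * n * v))) * ∫ y, g y

/-- The integrand in the Fourier representation of `lltError`, up to a phase. The frequency `s` is
measured on the scale `√n` of the fluctuations. -/
def lltIntegrand (p : ℝ → ℝ) (v : ℝ) (g : ℝ → ℝ) (n : ℕ) (s : ℝ) (x : ℕ → ℝ) : ℂ :=
  ofRealFourier g (s / (2 * π * √n)) * quenchedCharFun p n (s / √n) x -
    ofRealFourier g 0 * (exp (-(v * s ^ 2 / 2)) : ℝ)

section FourierInversion

variable {m : ℝ} {p : ℝ → ℝ} {n : ℕ} {x : ℕ → ℝ} {g : ℝ → ℝ}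

theorem bernoulliCharFun_eq_sum (m q t y : ℝ) :
    bernoulliCharFun q (2 * t * y) = ∑ b : Bool, ((if b then q else 1 - q : ℝ) : ℂ) *
      Complex.exp ((t * (y * (spin b - m) - y * (2 * q - 1 - m)) : ℝ) * Complex.I) := by
  rw [Fintype.sum_bool, bernoulliCharFun]
  simp only [spin, if_true, Bool.false_eq_true, if_false]
  congr 4 <;> (congr 1; ring)

theorem sum_spinWeight_mul_exp (m : ℝ) (p : ℝ → ℝ) (n : ℕ) (t : ℝ) (x : ℕ → ℝ) :
    ∑ τ : Fin n → Bool, (spinWeight p n x τ : ℂ) *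
      Complex.exp ((t * (Hn m n x τ - quenchedMean m p n x) : ℝ) * Complex.I) =
    quenchedCharFun p n t x := by
  simp only [quenchedCharFun, bernoulliCharFun_eq_sum m, Finset.prod_univ_sum,
    Fintype.piFinset_univ]
  refine Finset.sum_congr rfl fun τ _ => ?_
  rw [Finset.prod_mul_distrib, ← Complex.exp_sum, spinWeight, Complex.ofReal_prod,
    ← Finset.sum_mul, ← Complex.ofReal_sum, Hn, quenchedMean, ← Finset.sum_sub_distrib,
    Finset.mul_sum]

theorem quenchedExpect_eq_integral (hg_cont : Continuous g) (hg_int : Integrable g)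
    (hg_fourier : Integrable (ofRealFourier g)) (A : ℝ) :
    (quenchedExpect m p n x (fun y => g (y - A)) : ℂ) =
      ∫ t, Complex.exp ((2 * π * t * (quenchedMean m p n x - A) : ℝ) * Complex.I) *
        (ofRealFourier g t * quenchedCharFun p n (2 * π * t) x) := by
  have h_int (τ : Fin n → Bool) : Integrable fun t =>
      Complex.exp ((2 * π * t * (Hn m n x τ - A) : ℝ) * Complex.I) * ofRealFourier g t := by
    refine (integrable_exp_mul_I_mul hg_fourier (2 * π * (Hn m n x τ - A))).congr
      (.of_forall fun t => ?_)
    ring_nf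
  have h_split (t : ℝ) (τ : Fin n → Bool) :
      Complex.exp ((2 * π * t * (Hn m n x τ - A) : ℝ) * Complex.I) =
      Complex.exp ((2 * π * t * (quenchedMean m p n x - A) : ℝ) * Complex.I) *
      Complex.exp ((2 * π * t * (Hn m n x τ - quenchedMean m p n x) : ℝ) * Complex.I) := by
    rw [← Complex.exp_add, ← add_mul, ← Complex.ofReal_add]
    ring_nf
  simp only [quenchedExpect, Complex.ofReal_sum, Complex.ofReal_mul (spinWeight _ _ _ _),
    ofReal_eq_integral_ofRealFourier hg_cont hg_int hg_fourier, ← integral_const_mul]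
  rw [← integral_finsetSum _ fun τ _ => (h_int τ).const_mul _]
  refine integral_congr_ae (.of_forall fun t => ?_)
  simp only [← sum_spinWeight_mul_exp m, h_split, Finset.mul_sum]
  exact Finset.sum_congr rfl fun τ _ => by ring

theorem quenchedExpect_eq_integral_div_sqrt (hg_cont : Continuous g) (hg_int : Integrable g)
    (hg_fourier : Integrable (ofRealFourier g)) (hn : n ≠ 0) (A : ℝ) :
    ∫ s : ℝ, Complex.exp ((s * ((quenchedMean m p n x - A) / √n) : ℝ) * Complex.I) *
        (ofRealFourier g (s / (2 * π * √n)) * quenchedCharFun p n (s / √n) x) =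
      (2 * π * √n * quenchedExpect m p n x (fun y => g (y - A)) : ℝ) := by
  have : 0 < √(n : ℝ) := sqrt_pos.2 (by positivity)
  have h_subst := Measure.integral_comp_div (fun t : ℝ =>
    Complex.exp ((2 * π * t * (quenchedMean m p n x - A) : ℝ) * Complex.I) *
      (ofRealFourier g t * quenchedCharFun p n (2 * π * t) x)) (2 * π * √n)
  rw [← quenchedExpect_eq_integral hg_cont hg_int hg_fourier, abs_of_pos (by positivity),
    Complex.real_smul, ← Complex.ofReal_mul] at h_subst
  rw [← h_subst]
  refine integral_congr_ae (.of_forall fun s => ?_)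
  have h_scale : 2 * π * (s / (2 * π * √n)) = s / √n := by field_simp
  simp only [h_scale]
  ring_nf

theorem integrable_ofRealFourier_mul_quenchedCharFun (hp_cont : Continuous p)
    (hp : ∀ x, p x ∈ Ioo 0 1) (hg_fourier : Integrable (ofRealFourier g)) (hn : n ≠ 0) :
    Integrable fun s : ℝ =>
      ofRealFourier g (s / (2 * π * √n)) * quenchedCharFun p n (s / √n) x := by
  have : 0 < √(n : ℝ) := sqrt_pos.2 (by positivity)
  have h_cont : Continuous fun s : ℝ => quenchedCharFun p n (s / √n) x :=
    (continuous_quenchedCharFun hp_cont n).comp (by fun_prop : Continuous fun s : ℝ => (s / √n, x))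
  exact (hg_fourier.comp_div (by positivity)).mul_bdd (c := 1) h_cont.aestronglyMeasurable
    (.of_forall fun s => norm_quenchedCharFun_le_one hp _ _ _)

theorem ofReal_lltError_eq_integral (hp_cont : Continuous p) (hp : ∀ x, p x ∈ Ioo 0 1)
    (hg_cont : Continuous g) (hg_int : Integrable g) (hg_fourier : Integrable (ofRealFourier g))
    {v : ℝ} (hv : 0 < v) (hn : n ≠ 0) (A : ℝ) :
    (lltError m p v n x A g : ℂ) = (√(2 * π * v) / (2 * π) : ℝ) *
      ∫ s : ℝ, Complex.exp ((s * ((quenchedMean m p n x - A) / √n) : ℝ) * Complex.I) *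
        lltIntegrand p v g n s x := by
  have hn_pos : (0 : ℝ) < n := by positivity
  have : 0 < √(n : ℝ) := sqrt_pos.2 hn_pos
  simp only [lltIntegrand, mul_sub, mul_left_comm _ (ofRealFourier g 0)]
  rw [integral_sub (integrable_exp_mul_I_mul
      (integrable_ofRealFourier_mul_quenchedCharFun hp_cont hp hg_fourier hn) _)
    ((integrable_exp_mul_I_mul (integrable_ofReal_exp_neg_mul_sq_div_two hv) _).const_mul _),
    integral_const_mul, quenchedExpect_eq_integral_div_sqrt hg_cont hg_int hg_fourier hn,
    integral_exp_mul_I_mul_exp_neg_mul_sq_div_two hv, ofRealFourier_zero, ← Complex.ofReal_mul,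
    ← Complex.ofReal_sub, ← Complex.ofReal_mul, lltError]
  have h_scale : √(2 * π * n * v) = √(2 * π * v) * √n := by
    rw [← sqrt_mul (by positivity)]
    ring_nf
  have h_const : √(2 * π * v) / (2 * π) * √(2 * π / v) = 1 := by
    rw [div_mul_eq_mul_div, ← sqrt_mul (by positivity),
      show 2 * π * v * (2 * π / v) = (2 * π) ^ 2 by field_simp, sqrt_sq (by positivity),
      div_self (by positivity)]
  have h_exponent : ((quenchedMean m p n x - A) / √n) ^ 2 / (2 * v) =
      (A - quenchedMean m p n x) ^ 2 / (2 * n * v) := by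
    rw [div_pow, sq_sqrt hn_pos.le]
    field_simp
    ring
  have h_cancel (r : ℝ) : √(2 * π * v) / (2 * π) * (2 * π * √n * r) = √(2 * π * v) * √n * r := by
    field_simp
  rw [h_scale, h_exponent, Complex.ofReal_inj, mul_sub, h_cancel]
  linear_combination
    (∫ y, g y) * exp (-((A - quenchedMean m p n x) ^ 2 / (2 * n * v))) * h_const

theorem enorm_lltError_le (hp_cont : Continuous p) (hp : ∀ x, p x ∈ Ioo 0 1)
    (hg_cont : Continuous g) (hg_int : Integrable g) (hg_fourier : Integrable (ofRealFourier g))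
    {v : ℝ} (hv : 0 < v) (hn : n ≠ 0) (A : ℝ) :
    ‖lltError m p v n x A g‖ₑ ≤ ENNReal.ofReal (√(2 * π * v) / (2 * π)) *
      ∫⁻ s : ℝ, ‖lltIntegrand p v g n s x‖ₑ := by
  have h_enorm (r : ℝ) : ‖(r : ℂ)‖ₑ = ‖r‖ₑ := by
    rw [← ofReal_norm, Complex.norm_real, ofReal_norm]
  rw [← h_enorm, ofReal_lltError_eq_integral hp_cont hp hg_cont hg_int hg_fourier hv hn, enorm_mul,
    h_enorm, Real.enorm_of_nonneg (by positivity)]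
  gcongr
  refine (enorm_integral_le_lintegral_enorm _).trans_eq (lintegral_congr fun s => ?_)
  rw [enorm_mul, ← ofReal_norm, Complex.norm_exp_ofReal_mul_I, ENNReal.ofReal_one, one_mul]

end FourierInversion

/-! ### The quenched local central limit theorem in `L¹` -/

theorem one_add_mul_exp_neg_mul_le {C : ℝ} (hC : 0 < C) {y : ℝ} (hy : 0 ≤ y) :
    (1 + y) * exp (-(C * y)) ≤ 1 + C⁻¹ := by
  rw [exp_neg, ← div_eq_mul_inv, div_le_iff₀ (exp_pos _)]
  calc 1 + y ≤ (1 + C⁻¹) * (C * y + 1) := by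
        have h_expand : (1 + C⁻¹) * (C * y + 1) = 1 + y + C * y + C⁻¹ := by
          field_simp
          ring
        rw [h_expand]
        linarith [mul_nonneg hC.le hy, inv_pos.2 hC]
    _ ≤ (1 + C⁻¹) * exp (C * y) := by
        gcongr
        exact add_one_le_exp _

theorem one_add_sq_mul_exp_neg_min_le {C : ℝ} (hC : 0 < C) {n : ℕ} (hn : n ≠ 0) (s : ℝ) :
    (1 + s ^ 2) * exp (-(C * (n * min 1 ((s / √n) ^ 2)))) ≤ (1 + C⁻¹) * (1 + s ^ 2 / n) := by
  have hn_pos : (0 : ℝ) < n := by positivity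
  have h_div : 0 ≤ s ^ 2 / n := by positivity
  rw [div_pow, sq_sqrt hn_pos.le]
  rcases le_total (s ^ 2) n with h_le | h_ge
  · rw [min_eq_right ((div_le_one hn_pos).2 h_le), mul_div_cancel₀ _ hn_pos.ne']
    exact (one_add_mul_exp_neg_mul_le hC (sq_nonneg s)).trans
      (le_mul_of_one_le_right (by positivity) (by linarith))
  · rw [min_eq_left ((one_le_div hn_pos).2 h_ge), mul_one]
    calc (1 + s ^ 2) * exp (-(C * n))
        ≤ ((1 + n) * (1 + s ^ 2 / n)) * exp (-(C * n)) := by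
          gcongr
          have h_expand : (1 + n) * (1 + s ^ 2 / n) = 1 + s ^ 2 + (n + s ^ 2 / n) := by
            field_simp
            ring
          linarith
      _ = ((1 + n) * exp (-(C * n))) * (1 + s ^ 2 / n) := by ring
      _ ≤ (1 + C⁻¹) * (1 + s ^ 2 / n) := by
          gcongr
          exact one_add_mul_exp_neg_mul_le hC hn_pos.le

theorem inv_one_add_sq_div_two_pi_mul_sqrt_le (n : ℕ) (s : ℝ) :
    (1 + (s / (2 * π * √n)) ^ 2)⁻¹ ≤ (2 * π) ^ 2 * (1 + s ^ 2 / n)⁻¹ := by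
  have h_two_pi : 1 ≤ (2 * π) ^ 2 := one_le_pow₀ (by linarith [pi_gt_three])
  rw [div_pow, mul_pow, sq_sqrt n.cast_nonneg, ← div_eq_mul_inv, le_div_iff₀ (by positivity),
    inv_mul_le_iff₀ (by positivity)]
  calc 1 + s ^ 2 / n ≤ (2 * π) ^ 2 + s ^ 2 / n := by gcongr
    _ = (1 + s ^ 2 / ((2 * π) ^ 2 * n)) * (2 * π) ^ 2 := by
        rw [add_mul, one_mul, mul_comm _ (n : ℝ), ← div_div, div_mul_cancel₀ _ (by positivity)]

section LocalLimit

variable {m v : ℝ} {p : ℝ → ℝ} {n : ℕ} {x : ℕ → ℝ} {g : ℝ → ℝ}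

theorem continuous_lltIntegrand (hp_cont : Continuous p) (hg_int : Integrable g) (v : ℝ) (n : ℕ) :
    Continuous fun z : ℝ × (ℕ → ℝ) => lltIntegrand p v g n z.1 z.2 := by
  have h_fourier := continuous_ofRealFourier hg_int
  have h_char : Continuous fun z : ℝ × (ℕ → ℝ) => quenchedCharFun p n (z.1 / √n) z.2 :=
    (continuous_quenchedCharFun hp_cont n).comp
      (by fun_prop : Continuous fun z : ℝ × (ℕ → ℝ) => (z.1 / √n, z.2))
  unfold lltIntegrand
  fun_prop

theorem norm_ofRealFourier_mul_exp_neg_min_le {K : ℝ}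
    (hK : ∀ t, ‖ofRealFourier g t‖ ≤ K * (1 + t ^ 2)⁻¹) {C : ℝ} (hC : 0 < C) (hn : n ≠ 0) (s : ℝ) :
    ‖ofRealFourier g (s / (2 * π * √n))‖ * exp (-(C * (n * min 1 ((s / √n) ^ 2)))) ≤
      K * (2 * π) ^ 2 * (1 + C⁻¹) * (1 + s ^ 2)⁻¹ := by
  have hK_nonneg : 0 ≤ K := (norm_nonneg _).trans (by simpa using hK 0)
  rw [← div_eq_mul_inv _ (1 + s ^ 2), le_div_iff₀ (by positivity)]
  calc _ ≤ (K * ((2 * π) ^ 2 * (1 + s ^ 2 / n)⁻¹)) *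
        exp (-(C * (n * min 1 ((s / √n) ^ 2)))) * (1 + s ^ 2) := by
        gcongr
        exact (hK _).trans (by gcongr; exact inv_one_add_sq_div_two_pi_mul_sqrt_le n s)
    _ = (K * ((2 * π) ^ 2 * (1 + s ^ 2 / n)⁻¹)) *
        ((1 + s ^ 2) * exp (-(C * (n * min 1 ((s / √n) ^ 2))))) := by ring
    _ ≤ (K * ((2 * π) ^ 2 * (1 + s ^ 2 / n)⁻¹)) * ((1 + C⁻¹) * (1 + s ^ 2 / n)) := by
        gcongr ?_ * ?_
        exact one_add_sq_mul_exp_neg_min_le hC hn s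
    _ = K * (2 * π) ^ 2 * (1 + C⁻¹) := by field_simp

theorem norm_lltIntegrand_le (s : ℝ) :
    ‖lltIntegrand p v g n s x‖ ≤ ‖ofRealFourier g (s / (2 * π * √n))‖ *
      ‖quenchedCharFun p n (s / √n) x‖ + ‖ofRealFourier g 0‖ * exp (-(v * s ^ 2 / 2)) := by
  refine (norm_sub_le _ _).trans_eq ?_
  rw [norm_mul, norm_mul, Complex.norm_real, norm_of_nonneg (exp_pos _).le]

theorem norm_lltIntegrand_le_norm_sub (s : ℝ) :
    ‖lltIntegrand p v g n s x‖ ≤ ‖ofRealFourier g (s / (2 * π * √n))‖ *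
      ‖quenchedCharFun p n (s / √n) x - (exp (-(v * s ^ 2 / 2)) : ℝ)‖ +
      ‖ofRealFourier g (s / (2 * π * √n)) - ofRealFourier g 0‖ * exp (-(v * s ^ 2 / 2)) := by
  have h_split : lltIntegrand p v g n s x = ofRealFourier g (s / (2 * π * √n)) *
      (quenchedCharFun p n (s / √n) x - (exp (-(v * s ^ 2 / 2)) : ℝ)) +
      (ofRealFourier g (s / (2 * π * √n)) - ofRealFourier g 0) * (exp (-(v * s ^ 2 / 2)) : ℝ) := by
    rw [lltIntegrand]
    ring
  rw [h_split]
  refine (norm_add_le _ _).trans_eq ?_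
  rw [norm_mul, norm_mul, Complex.norm_real (exp _), norm_of_nonneg (exp_pos _).le]

section Smooth

variable {Ω : Type*} [MeasurableSpace Ω] {P : Measure Ω} [IsProbabilityMeasure P] {X : ℕ → Ω → ℝ}
  {μ : Measure ℝ}

theorem IsIID.integrable_quenchedCharFun (hX : IsIID P X μ) (hp_cont : Continuous p)
    (hp : ∀ x, p x ∈ Ioo 0 1) (n : ℕ) (t : ℝ) :
    Integrable (fun ω => quenchedCharFun p n t fun i => X i ω) P :=
  memLp_one_iff_integrable.1 (hX.memLp_quenchedCharFun hp_cont hp n t 1)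

theorem IsIID.integrable_lltIntegrand (hX : IsIID P X μ) (hp_cont : Continuous p)
    (hp : ∀ x, p x ∈ Ioo 0 1) (v : ℝ) (g : ℝ → ℝ) (n : ℕ) (s : ℝ) :
    Integrable (fun ω => lltIntegrand p v g n s fun i => X i ω) P :=
  ((hX.integrable_quenchedCharFun hp_cont hp n _).const_mul _).sub (integrable_const _)

theorem IsIID.exists_integral_norm_lltIntegrand_le (hX : IsIID P X μ)
    (hμ : DominatesLebesgueOnIcc μ) (hp_cont : Continuous p) (hp : ∀ x, p x ∈ Ioo 0 1)
    (hv : 0 < v) {K : ℝ} (hK : ∀ t, ‖ofRealFourier g t‖ ≤ K * (1 + t ^ 2)⁻¹) :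
    ∃ D, ∀ n : ℕ, n ≠ 0 → ∀ s,
      ∫ ω, ‖lltIntegrand p v g n s fun i => X i ω‖ ∂P ≤ D * (1 + s ^ 2)⁻¹ := by
  obtain ⟨C, hC, h_decay⟩ := hX.exists_integral_norm_quenchedCharFun_le hμ hp_cont hp
  refine ⟨K * (2 * π) ^ 2 * (1 + C⁻¹) + K * (1 + (v / 2)⁻¹), fun n hn s => ?_⟩
  have hK_zero : ‖ofRealFourier g 0‖ ≤ K := by simpa using hK 0
  have hK_nonneg : 0 ≤ K := (norm_nonneg _).trans hK_zero
  have h_char := (mul_le_mul_of_nonneg_left (h_decay n (s / √n)) (norm_nonneg _)).trans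
    (norm_ofRealFourier_mul_exp_neg_min_le hK hC hn s)
  have h_gauss : ‖ofRealFourier g 0‖ * exp (-(v * s ^ 2 / 2)) ≤
      K * (1 + (v / 2)⁻¹) * (1 + s ^ 2)⁻¹ := by
    have h_exp := one_add_mul_exp_neg_mul_le (half_pos hv) (sq_nonneg s)
    rw [div_mul_eq_mul_div] at h_exp
    rw [← div_eq_mul_inv, le_div_iff₀ (by positivity), mul_assoc, mul_comm (exp _)]
    gcongr
  have h_int := (hX.integrable_quenchedCharFun hp_cont hp n (s / √n)).norm.const_mul
    ‖ofRealFourier g (s / (2 * π * √n))‖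
  refine (integral_mono (hX.integrable_lltIntegrand hp_cont hp v g n s).norm
    (h_int.add (integrable_const _)) fun ω => norm_lltIntegrand_le s).trans ?_
  rw [integral_add' h_int (integrable_const _), integral_const_mul, integral_const, probReal_univ,
    one_smul, add_mul]
  exact add_le_add h_char h_gauss

theorem IsIID.tendsto_integral_norm_lltIntegrand (hX : IsIID P X μ)
    (hμ_sq : Integrable (fun x => x ^ 2) μ) (hp_cont : Continuous p) (hp : ∀ x, p x ∈ Ioo 0 1)
    (hg_int : Integrable g) (s : ℝ) :
    Tendsto (fun n : ℕ =>
      ∫ ω, ‖lltIntegrand p (quenchedVar p μ) g n s fun i => X i ω‖ ∂P) atTop (𝓝 0) := by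
  have h_freq : Tendsto (fun n : ℕ => ofRealFourier g (s / (2 * π * √n))) atTop
      (𝓝 (ofRealFourier g 0)) := by
    refine ((continuous_ofRealFourier hg_int).tendsto 0).comp ?_
    simpa only [div_div] using tendsto_const_div_sqrt_natCast (s / (2 * π))
  have h_char := hX.tendsto_integral_norm_quenchedCharFun_sub hμ_sq hp_cont hp s
  set c := exp (-(quenchedVar p μ * s ^ 2 / 2))
  have h_bound := (h_freq.norm.mul h_char).add
    ((h_freq.sub_const (ofRealFourier g 0)).norm.mul_const c)
  rw [mul_zero, sub_self, norm_zero, zero_mul, add_zero] at h_bound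
  refine squeeze_zero (fun n => integral_nonneg fun _ => norm_nonneg _) (fun n => ?_) h_bound
  have h_int := ((hX.integrable_quenchedCharFun hp_cont hp n (s / √n)).sub
    (integrable_const (c : ℂ))).norm.const_mul ‖ofRealFourier g (s / (2 * π * √n))‖
  refine (integral_mono (hX.integrable_lltIntegrand hp_cont hp _ g n s).norm
    (h_int.add (integrable_const _)) fun ω => norm_lltIntegrand_le_norm_sub s).trans_eq ?_
  rw [integral_add' h_int (integrable_const _), integral_const_mul, integral_const, probReal_univ,
    one_smul]
  rfl

theorem IsIID.tendsto_lintegral_lintegral_enorm_lltIntegrand (hX : IsIID P X μ)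
    (hμ : DominatesLebesgueOnIcc μ) (hμ_sq : Integrable (fun x => x ^ 2) μ)
    (hp_cont : Continuous p) (hp : ∀ x, p x ∈ Ioo 0 1) (hg_int : Integrable g) {K : ℝ}
    (hK : ∀ t, ‖ofRealFourier g t‖ ≤ K * (1 + t ^ 2)⁻¹) :
    Tendsto (fun n : ℕ => ∫⁻ s : ℝ, ∫⁻ ω,
      ‖lltIntegrand p (quenchedVar p μ) g n s fun i => X i ω‖ₑ ∂P) atTop (𝓝 0) := by
  have h_meas (n : ℕ) : Measurable fun z : ℝ × Ω =>
      ‖lltIntegrand p (quenchedVar p μ) g n z.1 fun i => X i z.2‖ₑ :=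
    ((continuous_lltIntegrand hp_cont hg_int _ n).measurable.comp
      (measurable_fst.prodMk (hX.measurable_pi.comp measurable_snd))).enorm
  have h_meas_lintegral (n : ℕ) : Measurable fun s : ℝ => ∫⁻ ω,
      ‖lltIntegrand p (quenchedVar p μ) g n s fun i => X i ω‖ₑ ∂P :=
    (h_meas n).lintegral_prod_right'
  have h_ofReal (n : ℕ) (s : ℝ) := ofReal_integral_norm_eq_lintegral_enorm
    (hX.integrable_lltIntegrand hp_cont hp (quenchedVar p μ) g n s)
  obtain ⟨D, hD⟩ := hX.exists_integral_norm_lltIntegrand_le hμ hp_cont hp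
    (quenchedVar_pos hp_cont hp hμ hμ_sq) hK
  rw [← lintegral_zero (μ := (volume : Measure ℝ))]
  refine tendsto_lintegral_filter_of_dominated_convergence
    (fun s => ENNReal.ofReal (D * (1 + s ^ 2)⁻¹)) (.of_forall h_meas_lintegral) ?_
    (integrable_inv_one_add_sq.const_mul D).lintegral_lt_top.ne (.of_forall fun s => ?_)
  · filter_upwards [eventually_ne_atTop 0] with n hn
    refine .of_forall fun s => ?_
    rw [← h_ofReal]
    exact ENNReal.ofReal_le_ofReal (hD n hn s)
  · simp only [← h_ofReal]
    rw [← ENNReal.ofReal_zero]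
    exact ENNReal.tendsto_ofReal
      (hX.tendsto_integral_norm_lltIntegrand hμ_sq hp_cont hp hg_int s)

theorem IsIID.tendsto_lintegral_enorm_lltError_of_contDiff (hX : IsIID P X μ)
    (hμ : DominatesLebesgueOnIcc μ) (hμ_sq : Integrable (fun x => x ^ 2) μ)
    (hp_cont : Continuous p) (hp : ∀ x, p x ∈ Ioo 0 1) (m : ℝ) (A : ℕ → Ω → ℝ)
    (hg_smooth : ContDiff ℝ ((⊤ : ℕ∞) : WithTop ℕ∞) g) (hg_supp : HasCompactSupport g) :
    Tendsto (fun n : ℕ =>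
      ∫⁻ ω, ‖lltError m p (quenchedVar p μ) n (fun i => X i ω) (A n ω) g‖ₑ ∂P) atTop (𝓝 0) := by
  have hv := quenchedVar_pos hp_cont hp hμ hμ_sq
  set v := quenchedVar p μ
  have hg_cont := hg_smooth.continuous
  have hg_int := hg_cont.integrable_of_hasCompactSupport hg_supp (μ := volume)
  obtain ⟨K, hK⟩ := exists_norm_ofRealFourier_le hg_smooth hg_supp
  have hg_fourier : Integrable (ofRealFourier g) :=
    (integrable_inv_one_add_sq.const_mul K).mono'
      (continuous_ofRealFourier hg_int).aestronglyMeasurable (.of_forall hK)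
  have h_lim := ENNReal.Tendsto.const_mul (a := ENNReal.ofReal (√(2 * π * v) / (2 * π)))
    (hX.tendsto_lintegral_lintegral_enorm_lltIntegrand hμ hμ_sq hp_cont hp hg_int hK)
    (.inr ENNReal.ofReal_ne_top)
  rw [mul_zero] at h_lim
  refine tendsto_of_tendsto_of_tendsto_of_le_of_le' tendsto_const_nhds h_lim
    (.of_forall fun _ => zero_le) ?_
  filter_upwards [eventually_ne_atTop 0] with n hn
  have h_meas : Measurable fun z : Ω × ℝ => ‖lltIntegrand p v g n z.2 fun i => X i z.1‖ₑ :=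
    ((continuous_lltIntegrand hp_cont hg_int v n).measurable.comp
      (measurable_snd.prodMk (hX.measurable_pi.comp measurable_fst))).enorm
  calc ∫⁻ ω, ‖lltError m p v n (fun i => X i ω) (A n ω) g‖ₑ ∂P
      ≤ ∫⁻ ω, ENNReal.ofReal (√(2 * π * v) / (2 * π)) *
          (∫⁻ s : ℝ, ‖lltIntegrand p v g n s fun i => X i ω‖ₑ) ∂P :=
        lintegral_mono fun ω => enorm_lltError_le hp_cont hp hg_cont hg_int hg_fourier hv hn _
    _ = ENNReal.ofReal (√(2 * π * v) / (2 * π)) *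
          ∫⁻ s : ℝ, ∫⁻ ω, ‖lltIntegrand p v g n s fun i => X i ω‖ₑ ∂P := by
        rw [lintegral_const_mul _ h_meas.lintegral_prod_right',
          lintegral_lintegral_swap h_meas.aemeasurable]

end Smooth

theorem spinWeight_nonneg (hp : ∀ x, p x ∈ Ioo 0 1) (τ : Fin n → Bool) : 0 ≤ spinWeight p n x τ :=
  Finset.prod_nonneg fun i _ => by
    split_ifs
    · exact (hp _).1.le
    · exact sub_nonneg.2 (hp _).2.le

theorem abs_quenchedExpect_sub_le (hp : ∀ x, p x ∈ Ioo 0 1) {φ₁ φ₂ b : ℝ → ℝ} {ε : ℝ}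
    (h : ∀ y, |φ₁ y - φ₂ y| ≤ ε * b y) :
    |quenchedExpect m p n x φ₁ - quenchedExpect m p n x φ₂| ≤ ε * quenchedExpect m p n x b := by
  unfold quenchedExpect
  rw [← Finset.sum_sub_distrib, Finset.mul_sum]
  refine (Finset.abs_sum_le_sum_abs _ _).trans (Finset.sum_le_sum fun τ _ => ?_)
  have h_nonneg : 0 ≤ spinWeight p n x τ := spinWeight_nonneg hp τ
  rw [← mul_sub, abs_mul, abs_of_nonneg h_nonneg, mul_left_comm]
  exact mul_le_mul_of_nonneg_left (h _) h_nonneg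

theorem abs_lltError_le_of_abs_sub_le (hp : ∀ x, p x ∈ Ioo 0 1) (hv : 0 ≤ v) {A ε : ℝ}
    (hε : 0 ≤ ε) {ψ g b : ℝ → ℝ} (hb_nonneg : ∀ y, 0 ≤ b y) (hψ_int : Integrable ψ)
    (hg_int : Integrable g) (hb_int : Integrable b) (h_sub : ∀ y, |ψ y - g y| ≤ ε * b y) :
    |lltError m p v n x A ψ| ≤
      ε * |lltError m p v n x A b| + 2 * ε * (∫ y, b y) + |lltError m p v n x A g| := by
  have h_expect := abs_quenchedExpect_sub_le (m := m) (n := n) (x := x) hp fun y => h_sub (y - A)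
  have h_integral : |(∫ y, ψ y) - ∫ y, g y| ≤ ε * ∫ y, b y := by
    rw [← integral_sub hψ_int hg_int, ← integral_const_mul]
    exact (norm_integral_le_integral_norm _).trans
      (integral_mono (hψ_int.sub hg_int).norm (hb_int.const_mul _) h_sub)
  have hb_integral : 0 ≤ ∫ y, b y := integral_nonneg hb_nonneg
  unfold lltError
  set R := exp (-((A - quenchedMean m p n x) ^ 2 / (2 * n * v)))
  have hR : R ∈ Icc 0 1 := ⟨(exp_pos _).le, exp_le_one_iff.2 (neg_nonpos.2 (by positivity))⟩
  set r := √(2 * π * n * v)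
  set Eψ := quenchedExpect m p n x fun y => ψ (y - A)
  set Eg := quenchedExpect m p n x fun y => g (y - A)
  set Eb := quenchedExpect m p n x fun y => b (y - A)
  have hr_Eb : r * Eb ≤ |r * Eb - R * ∫ y, b y| + ∫ y, b y := by
    linarith [le_abs_self (r * Eb - R * ∫ y, b y), mul_le_of_le_one_left hb_integral hR.2]
  calc |r * Eψ - R * ∫ y, ψ y|
      = |r * (Eψ - Eg) + (r * Eg - R * ∫ y, g y) + -(R * ((∫ y, ψ y) - ∫ y, g y))| := by
        congr 1
        ring
    _ ≤ |r * (Eψ - Eg)| + |r * Eg - R * ∫ y, g y| + |-(R * ((∫ y, ψ y) - ∫ y, g y))| :=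
        abs_add_three _ _ _
    _ ≤ r * (ε * Eb) + |r * Eg - R * ∫ y, g y| + 1 * (ε * ∫ y, b y) := by
        rw [abs_neg, abs_mul, abs_mul, abs_of_nonneg (sqrt_nonneg _), abs_of_nonneg hR.1]
        gcongr
        exact hR.2
    _ ≤ ε * |r * Eb - R * ∫ y, b y| + 2 * ε * (∫ y, b y) + |r * Eg - R * ∫ y, g y| := by
        linarith [mul_le_mul_of_nonneg_left hr_Eb hε]

theorem exists_contDiff_forall_exists_abs_sub_le {ψ : ℝ → ℝ} (hψ_cont : Continuous ψ)
    (hψ_supp : HasCompactSupport ψ) :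
    ∃ b : ℝ → ℝ, ContDiff ℝ ((⊤ : ℕ∞) : WithTop ℕ∞) b ∧ HasCompactSupport b ∧ (∀ y, 0 ≤ b y) ∧
      ∀ ε > 0, ∃ g : ℝ → ℝ, ContDiff ℝ ((⊤ : ℕ∞) : WithTop ℕ∞) g ∧ HasCompactSupport g ∧
        ∀ y, |ψ y - g y| ≤ ε * b y := by
  obtain ⟨r, hr, h_subset⟩ := hψ_supp.isCompact.isBounded.subset_closedBall_lt 0 0
  let b : ContDiffBump (0 : ℝ) := ⟨r, r + 1, hr, lt_add_one r⟩
  refine ⟨b, b.contDiff, b.hasCompactSupport, fun _ => b.nonneg, fun ε hε => ?_⟩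
  obtain ⟨g, hg_smooth, hg_dist, hg_supp⟩ :=
    hψ_cont.exists_contDiff_approx (⊤ : ℕ∞) (continuous_const (y := ε)) fun _ => hε
  refine ⟨g, hg_smooth, hψ_supp.mono hg_supp, fun y => ?_⟩
  by_cases hy : ψ y = 0
  · have hgy : g y = 0 := by_contra fun h => hg_supp h hy
    rw [hy, hgy, sub_zero, abs_zero]
    exact mul_nonneg hε.le b.nonneg
  · rw [b.one_of_mem_closedBall (h_subset (subset_tsupport ψ hy)), mul_one, ← Real.dist_eq,
      dist_comm]
    exact (hg_dist y).le

theorem continuous_quenchedMean (hp_cont : Continuous p) : Continuous (quenchedMean m p n) := by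
  unfold quenchedMean
  fun_prop

theorem continuous_Hn (τ : Fin n → Bool) : Continuous fun x => Hn m n x τ := by
  unfold Hn
  fun_prop

theorem continuous_lltError (hp_cont : Continuous p) (hg_cont : Continuous g) :
    Continuous fun z : (ℕ → ℝ) × ℝ => lltError m p v n z.1 z.2 g := by
  have h_mean : Continuous (quenchedMean m p n) := continuous_quenchedMean hp_cont
  have h_energy (τ : Fin n → Bool) : Continuous fun x => Hn m n x τ := continuous_Hn τ
  have h_weight (τ : Fin n → Bool) : Continuous fun x => spinWeight p n x τ :=
    continuous_finsetProd _ fun i _ => by split_ifs <;> fun_prop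
  unfold lltError quenchedExpect
  fun_prop

section ContinuousTest

variable {Ω : Type*} [MeasurableSpace Ω] {P : Measure Ω} [IsProbabilityMeasure P] {X : ℕ → Ω → ℝ}
  {μ : Measure ℝ}

theorem IsIID.lintegral_enorm_lltError_le (hX : IsIID P X μ) (hp_cont : Continuous p)
    (hp : ∀ x, p x ∈ Ioo 0 1) (hv : 0 ≤ v) {A : Ω → ℝ} (hA : Measurable A) {ε : ℝ} (hε : 0 ≤ ε)
    {ψ g b : ℝ → ℝ} (hg_cont : Continuous g) (hb_cont : Continuous b) (hb_nonneg : ∀ y, 0 ≤ b y)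
    (hψ_int : Integrable ψ) (hg_int : Integrable g) (hb_int : Integrable b)
    (h_sub : ∀ y, |ψ y - g y| ≤ ε * b y) :
    ∫⁻ ω, ‖lltError m p v n (fun i => X i ω) (A ω) ψ‖ₑ ∂P ≤
      ENNReal.ofReal ε * (∫⁻ ω, ‖lltError m p v n (fun i => X i ω) (A ω) b‖ₑ ∂P) +
        ENNReal.ofReal (2 * ε * ∫ y, b y) +
        ∫⁻ ω, ‖lltError m p v n (fun i => X i ω) (A ω) g‖ₑ ∂P := by
  have h_meas {φ : ℝ → ℝ} (hφ : Continuous φ) :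
      Measurable fun ω => ‖lltError m p v n (fun i => X i ω) (A ω) φ‖ₑ :=
    ((continuous_lltError hp_cont hφ).measurable.comp (hX.measurable_pi.prodMk hA)).enorm
  rw [← lintegral_const_mul _ (h_meas hb_cont), ← mul_one (ENNReal.ofReal (2 * ε * ∫ y, b y)),
    ← measure_univ (μ := P), ← lintegral_const, ← lintegral_add_right _ measurable_const,
    ← lintegral_add_right _ (h_meas hg_cont)]
  refine lintegral_mono fun ω => ?_
  have hb_integral : 0 ≤ ∫ y, b y := integral_nonneg hb_nonneg
  simp only [Real.enorm_eq_ofReal_abs]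
  rw [← ENNReal.ofReal_mul hε, ← ENNReal.ofReal_add (by positivity) (by positivity),
    ← ENNReal.ofReal_add (by positivity) (by positivity)]
  exact ENNReal.ofReal_le_ofReal
    (abs_lltError_le_of_abs_sub_le hp hv hε hb_nonneg hψ_int hg_int hb_int h_sub)

theorem IsIID.tendsto_lintegral_enorm_lltError (hX : IsIID P X μ)
    (hμ : DominatesLebesgueOnIcc μ) (hμ_sq : Integrable (fun x => x ^ 2) μ)
    (hp_cont : Continuous p) (hp : ∀ x, p x ∈ Ioo 0 1) (m : ℝ) {A : ℕ → Ω → ℝ}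
    (hA : ∀ n, Measurable (A n)) {ψ : ℝ → ℝ} (hψ_cont : Continuous ψ)
    (hψ_supp : HasCompactSupport ψ) :
    Tendsto (fun n : ℕ =>
      ∫⁻ ω, ‖lltError m p (quenchedVar p μ) n (fun i => X i ω) (A n ω) ψ‖ₑ ∂P) atTop (𝓝 0) := by
  obtain ⟨b, hb_smooth, hb_supp, hb_nonneg, h_approx⟩ :=
    exists_contDiff_forall_exists_abs_sub_le hψ_cont hψ_supp
  refine ENNReal.tendsto_nhds_zero.2 fun δ hδ => ?_
  obtain ⟨ε, hε_lt, hε⟩ : ∃ ε, ENNReal.ofReal (2 * ε * ∫ y, b y) < δ ∧ 0 < ε := by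
    have h_lim : Tendsto (fun ε => ENNReal.ofReal (2 * ε * ∫ y, b y)) (𝓝[>] 0) (𝓝 0) := by
      have h_cont : Continuous fun ε => ENNReal.ofReal (2 * ε * ∫ y, b y) :=
        ENNReal.continuous_ofReal.comp (by fun_prop)
      simpa using (h_cont.tendsto 0).mono_left nhdsWithin_le_nhds
    exact ((h_lim.eventually_lt_const hδ).and self_mem_nhdsWithin).exists
  obtain ⟨g, hg_smooth, hg_supp, h_sub⟩ := h_approx ε hε
  have h_lim := ((ENNReal.Tendsto.const_mul (a := ENNReal.ofReal ε)
    (hX.tendsto_lintegral_enorm_lltError_of_contDiff hμ hμ_sq hp_cont hp m A hb_smooth hb_supp)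
    (.inr ENNReal.ofReal_ne_top)).add_const (ENNReal.ofReal (2 * ε * ∫ y, b y))).add
    (hX.tendsto_lintegral_enorm_lltError_of_contDiff hμ hμ_sq hp_cont hp m A hg_smooth hg_supp)
  rw [mul_zero, zero_add, add_zero] at h_lim
  filter_upwards [h_lim.eventually_lt_const hε_lt] with n hn
  exact (hX.lintegral_enorm_lltError_le hp_cont hp (quenchedVar_pos hp_cont hp hμ hμ_sq).le (hA n)
    hε.le hg_smooth.continuous hb_smooth.continuous hb_nonneg
    (hψ_cont.integrable_of_hasCompactSupport hψ_supp)
    (hg_smooth.continuous.integrable_of_hasCompactSupport hg_supp)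
    (hb_smooth.continuous.integrable_of_hasCompactSupport hb_supp) h_sub).trans hn.le

end ContinuousTest

end LocalLimit

/-! ### Poisson approximation of independent thinnings -/

theorem integral_exp_neg_ite_le_uniform {q : ℝ} (hq : q ∈ Icc 0 1) (c : ℝ) :
    ∫ u in Icc (0 : ℝ) 1, exp (-(if u ≤ q then c else 0)) = 1 - q * (1 - exp (-c)) := by
  have h_indicator (u : ℝ) : exp (-(if u ≤ q then c else 0)) =
      1 + (Iic q).indicator (fun _ => exp (-c) - 1) u := by
    by_cases hu : u ≤ q
    · rw [if_pos hu, indicator_of_mem (mem_Iic.2 hu), add_sub_cancel]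
    · rw [if_neg hu, indicator_of_notMem (notMem_Iic.2 (not_le.1 hu)), neg_zero, exp_zero, add_zero]
  have h_inter : Iic q ∩ Icc 0 1 = Icc 0 q := by
    ext u
    exact ⟨fun hu => ⟨hu.2.1, hu.1⟩, fun hu => ⟨hu.2, hu.1, hu.2.trans hq.2⟩⟩
  simp only [h_indicator]
  rw [integral_add (integrable_const _) ((integrable_const _).indicator measurableSet_Iic),
    integral_indicator measurableSet_Iic, Measure.restrict_restrict measurableSet_Iic, h_inter,
    setIntegral_const, setIntegral_const, volume_real_Icc_of_le zero_le_one,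
    volume_real_Icc_of_le hq.1, smul_eq_mul, smul_eq_mul]
  ring

theorem integral_exp_neg_sum_ite_le_uniform {ι : Type*} [Fintype ι] {q : ι → ℝ}
    (hq : ∀ i, q i ∈ Icc 0 1) (c : ι → ℝ) :
    ∫ u, exp (-(∑ i, if u i ≤ q i then c i else 0))
      ∂(Measure.pi fun _ : ι => (volume : Measure ℝ).restrict (Icc 0 1)) =
      ∏ i, (1 - q i * (1 - exp (-(c i)))) := by
  simp only [← Finset.sum_neg_distrib, exp_sum]
  rw [integral_fintype_prod_eq_prod (𝕜 := ℝ) (E := fun _ : ι => ℝ)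
    (fun i u => exp (-(if u ≤ q i then c i else 0)))]
  exact Finset.prod_congr rfl fun i _ => integral_exp_neg_ite_le_uniform (hq i) (c i)

theorem exp_neg_div_one_sub_le {x q : ℝ} (hx : x ∈ Icc 0 q) (hq : q < 1) :
    exp (-(x / (1 - q))) ≤ 1 - x := by
  have : 0 < 1 - q := sub_pos.2 hq
  have hx_pos : 0 < 1 - x := by linarith [hx.2]
  rw [exp_neg]
  refine inv_le_of_inv_le₀ hx_pos ?_
  calc (1 - x)⁻¹ = x / (1 - x) + 1 := by field_simp; ring
    _ ≤ x / (1 - q) + 1 := by gcongr; exacts [hx.1, hx.2]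
    _ ≤ exp (x / (1 - q)) := add_one_le_exp _

theorem exp_neg_sub_exp_neg_div_one_sub_le {s q : ℝ} (hq : q ∈ Ico 0 1) :
    exp (-s) - exp (-(s / (1 - q))) ≤ q / (1 - q) := by
  have hq_pos : 0 < 1 - q := sub_pos.2 hq.2
  have h_ratio : 0 ≤ q / (1 - q) := div_nonneg hq.1 hq_pos.le
  have h_split : exp (-(s / (1 - q))) = exp (-s) * exp (-(s * (q / (1 - q)))) := by
    rw [← exp_add]
    congr 1
    field_simp
    ring
  calc exp (-s) - exp (-(s / (1 - q))) = exp (-s) * (1 - exp (-(s * (q / (1 - q))))) := by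
        rw [h_split]
        ring
    _ ≤ exp (-s) * (s * (q / (1 - q))) := by
        gcongr
        linarith [one_sub_le_exp_neg (s * (q / (1 - q)))]
    _ = s * exp (-s) * (q / (1 - q)) := by ring
    _ ≤ 1 * (q / (1 - q)) := by
        gcongr
        rw [exp_neg, ← div_eq_mul_inv, div_le_one (exp_pos s)]
        linarith [add_one_le_exp s]
    _ = q / (1 - q) := one_mul _

theorem abs_prod_one_sub_sub_exp_neg_sum_le {ι : Type*} [Fintype ι] {x : ι → ℝ} {q : ℝ}
    (hx : ∀ i, x i ∈ Icc 0 q) (hq : q ∈ Ico 0 1) :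
    |∏ i, (1 - x i) - exp (-(∑ i, x i))| ≤ q / (1 - q) := by
  have h_upper : ∏ i, (1 - x i) ≤ exp (-(∑ i, x i)) := by
    rw [← Finset.sum_neg_distrib, exp_sum]
    exact Finset.prod_le_prod (fun i _ => by linarith [(hx i).2, hq.2])
      fun i _ => one_sub_le_exp_neg _
  have h_lower : exp (-((∑ i, x i) / (1 - q))) ≤ ∏ i, (1 - x i) := by
    rw [Finset.sum_div, ← Finset.sum_neg_distrib, exp_sum]
    exact Finset.prod_le_prod (fun i _ => (exp_pos _).le)
      fun i _ => exp_neg_div_one_sub_le (hx i) hq.2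
  rw [abs_of_nonpos (sub_nonpos.2 h_upper), neg_sub]
  exact (sub_le_sub_left h_lower _).trans (exp_neg_sub_exp_neg_div_one_sub_le hq)

/-- The exponential rate at which the thinning probabilities `Qw m ρ n τ` decay, uniformly in `τ`:
the ratio `((1 + |m|) / 2) ^ (1 - ρ)` of the largest spin probability to the thinning factor. -/
def thinningRate (m ρ : ℝ) : ℝ := exp (-((1 - ρ) * (log 2 - log (1 + |m|))))

section Thinning

variable {m ρ : ℝ} {n : ℕ}

theorem thinningRate_mem_Ioo (hm : m ∈ Ioo (-1) 1) (hρ : ρ < 1) : thinningRate m ρ ∈ Ioo 0 1 := by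
  have h_log : log (1 + |m|) < log 2 := log_lt_log (by positivity) (by linarith [abs_lt.2 hm])
  exact ⟨exp_pos _, exp_lt_one_iff.2 (neg_neg_of_pos (mul_pos (sub_pos.2 hρ) (sub_pos.2 h_log)))⟩

theorem one_add_mul_spin_div_two_mem_Icc (hm : m ∈ Ioo (-1) 1) (b : Bool) :
    (1 + m * spin b) / 2 ∈ Icc 0 ((1 + |m|) / 2) := by
  cases b <;> simp only [spin, if_true, Bool.false_eq_true, if_false] <;> constructor <;>
    linarith [hm.1, hm.2, le_abs_self m, neg_abs_le m]

theorem Qw_mem_Icc (hm : m ∈ Ioo (-1) 1) (τ : Fin n → Bool) :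
    Qw m ρ n τ ∈ Icc 0 (thinningRate m ρ ^ n) := by
  have h_factor (i : Fin n) := one_add_mul_spin_div_two_mem_Icc hm (τ i)
  refine ⟨mul_nonneg (exp_pos _).le (Finset.prod_nonneg fun i _ => (h_factor i).1), ?_⟩
  have h_base : (1 + |m|) / 2 = exp (-(log 2 - log (1 + |m|))) := by
    rw [neg_sub, exp_sub, exp_log (by positivity), exp_log two_pos]
  calc Qw m ρ n τ
      ≤ exp (n * ρ * (log 2 - log (1 + |m|))) * ∏ _i : Fin n, (1 + |m|) / 2 :=
        mul_le_mul_of_nonneg_left (Finset.prod_le_prod (fun i _ => (h_factor i).1)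
          fun i _ => (h_factor i).2) (exp_pos _).le
    _ = thinningRate m ρ ^ n := by
        rw [Finset.prod_const, Finset.card_univ, Fintype.card_fin, h_base, thinningRate,
          ← exp_nat_mul, ← exp_nat_mul, ← exp_add]
        ring_nf

end Thinning

/-! ### Exponential tilting of the thinned sums -/

section Tilting

variable {m : ℝ}

theorem one_add_mul_spin_div_two_eq (hm : m ∈ Ioo (-1) 1) (y : ℝ) (b : Bool) :
    (1 + m * spin b) / 2 =
      (if b then tiltProb m y else 1 - tiltProb m y) * exp (gfun m y - y * (spin b - m)) := by
  cases b
  · simp only [spin, Bool.false_eq_true, if_false]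
    rw [one_sub_tiltProb hm, mul_assoc, ← exp_add]
    ring_nf
    rw [exp_zero]
    ring
  · simp only [spin, if_true]
    rw [tiltProb, mul_assoc, ← exp_add]
    ring_nf
    rw [exp_zero]
    ring

theorem prod_one_add_mul_spin_div_two_eq (hm : m ∈ Ioo (-1) 1) (l : ℝ) {n : ℕ} (x : ℕ → ℝ)
    (τ : Fin n → Bool) :
    ∏ i, (1 + m * spin (τ i)) / 2 = spinWeight (fun y => tiltProb m (l * y)) n x τ *
      exp ((∑ i : Fin n, gfun m (l * x i)) - l * Hn m n x τ) := by
  rw [Finset.prod_congr rfl fun (i : Fin n) _ => one_add_mul_spin_div_two_eq hm (l * x i) (τ i),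
    Finset.prod_mul_distrib, spinWeight, ← exp_sum, Finset.sum_sub_distrib, Hn, Finset.mul_sum]
  simp only [mul_assoc]

theorem sum_Qw_mul_eq (hm : m ∈ Ioo (-1) 1) (ρ l : ℝ) (n : ℕ) (x : ℕ → ℝ) (A : ℝ) (φ : ℝ → ℝ) :
    ∑ τ : Fin n → Bool, Qw m ρ n τ * φ (Hn m n x τ - A) =
      exp (n * (ρ * (log 2 - log (1 + |m|))) + (∑ i : Fin n, gfun m (l * x i)) - l * A) *
        quenchedExpect m (fun y => tiltProb m (l * y)) n x
          fun y => φ (y - A) * exp (-(l * (y - A))) := by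
  rw [quenchedExpect, Finset.mul_sum]
  refine Finset.sum_congr rfl fun τ _ => ?_
  have h_exp : exp (n * ρ * (log 2 - log (1 + |m|))) *
      exp ((∑ i : Fin n, gfun m (l * x i)) - l * Hn m n x τ) =
      exp (n * (ρ * (log 2 - log (1 + |m|))) + (∑ i : Fin n, gfun m (l * x i)) - l * A) *
        exp (-(l * (Hn m n x τ - A))) := by
    rw [← exp_add, ← exp_add]
    ring_nf
  rw [Qw, prod_one_add_mul_spin_div_two_eq hm l x]
  linear_combination (spinWeight (fun y => tiltProb m (l * y)) n x τ * φ (Hn m n x τ - A)) * h_exp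

end Tilting

/-! ### The saddle point -/

section SaddlePoint

variable {m : ℝ} {μ : Measure ℝ}

theorem abs_mul_two_mul_tiltProb_sub_le (hm : m ∈ Ioo (-1) 1) (l x : ℝ) :
    |x * (2 * tiltProb m (l * x) - 1 - m)| ≤ 2 * |x| := by
  rw [abs_mul, mul_comm]
  exact mul_le_mul_of_nonneg_right (abs_two_mul_tiltProb_sub_le hm _) (abs_nonneg x)

theorem integrable_gfun (hm : m ∈ Ioo (-1) 1) (hμ_int : Integrable (fun x => x) μ) (l : ℝ) :
    Integrable (fun x => gfun m (l * x)) μ := by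
  have := continuous_gfun hm
  refine ((hμ_int.const_mul l).abs.const_mul 2).mono'
    (by fun_prop : Continuous fun x => gfun m (l * x)).aestronglyMeasurable ?_
  exact .of_forall fun x => abs_gfun_le hm (l * x)

theorem integrable_mul_two_mul_tiltProb_sub (hm : m ∈ Ioo (-1) 1)
    (hμ_int : Integrable (fun x => x) μ) (l : ℝ) :
    Integrable (fun x => x * (2 * tiltProb m (l * x) - 1 - m)) μ := by
  have := continuous_tiltProb hm
  exact (hμ_int.abs.const_mul 2).mono'
    (by fun_prop : Continuous fun x => x * (2 * tiltProb m (l * x) - 1 - m)).aestronglyMeasurable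
    (.of_forall (abs_mul_two_mul_tiltProb_sub_le hm l))

theorem hasDerivAt_Gf (hm : m ∈ Ioo (-1) 1) (hμ_int : Integrable (fun x => x) μ) (l : ℝ) :
    HasDerivAt (Gf μ m) (∫ x, x * (2 * tiltProb m (l * x) - 1 - m) ∂μ) l := by
  refine (hasDerivAt_integral_of_dominated_loc_of_deriv_le (F := fun l x => gfun m (l * x))
    (F' := fun l x => x * (2 * tiltProb m (l * x) - 1 - m)) (bound := fun x => 2 * |x|) univ_mem
    (.of_forall fun l => (integrable_gfun hm hμ_int l).1) (integrable_gfun hm hμ_int l)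
    (integrable_mul_two_mul_tiltProb_sub hm hμ_int l).1
    (.of_forall fun x l _ => abs_mul_two_mul_tiltProb_sub_le hm l x) (hμ_int.abs.const_mul 2)
    (.of_forall fun x l _ => ?_)).2
  refine ((hasDerivAt_gfun hm (l * x)).comp l ((hasDerivAt_id l).mul_const x)).congr_deriv ?_
  ring

theorem Gstar_deriv_Gf (hm : m ∈ Ioo (-1) 1) (hμ_int : Integrable (fun x => x) μ) (l : ℝ) :
    Gstar μ m (deriv (Gf μ m) l) = l * deriv (Gf μ m) l - Gf μ m l := by
  set a := deriv (Gf μ m) l with ha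
  rw [(hasDerivAt_Gf hm hμ_int l).deriv] at ha
  have h_le (k : ℝ) : k * a - Gf μ m k ≤ l * a - Gf μ m l := by
    have h_gfun := integrable_gfun hm hμ_int l
    have h_slope := (integrable_mul_two_mul_tiltProb_sub hm hμ_int l).const_mul (k - l)
    have h_tangent : ∫ x, (gfun m (l * x) + (k - l) * (x * (2 * tiltProb m (l * x) - 1 - m))) ∂μ ≤
        ∫ x, gfun m (k * x) ∂μ := by
      refine integral_mono (h_gfun.add h_slope) (integrable_gfun hm hμ_int k) fun x => ?_
      linarith [gfun_add_le hm (k * x) (l * x)]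
    rw [integral_add h_gfun h_slope, integral_const_mul, ← ha] at h_tangent
    rw [Gf, Gf]
    linarith
  exact le_antisymm (ciSup_le h_le)
    (le_ciSup (f := fun k => k * a - Gf μ m k) ⟨_, forall_mem_range.2 h_le⟩ l)

/-- The contribution of a site with field `x` to `A - M`, where `M` is the mean of the energy tilted
by `l` and `A` the level at which `exp (n * r + ∑ i, gfun m (l * x i) - l * A)` equals `1`. -/
def levelExcess (m r l x : ℝ) : ℝ :=
  (r + gfun m (l * x)) / l - x * (2 * tiltProb m (l * x) - 1 - m)

theorem continuous_levelExcess (hm : m ∈ Ioo (-1) 1) (r l : ℝ) :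
    Continuous (levelExcess m r l) := by
  have := continuous_gfun hm
  have := continuous_tiltProb hm
  unfold levelExcess
  fun_prop

theorem integral_levelExcess [IsProbabilityMeasure μ] (hm : m ∈ Ioo (-1) 1)
    (hμ_int : Integrable (fun x => x) μ) {l : ℝ} (hl : l ≠ 0) :
    ∫ x, levelExcess m (Gstar μ m (deriv (Gf μ m) l)) l x ∂μ = 0 := by
  have h_gfun := integrable_gfun hm hμ_int l
  set r := Gstar μ m (deriv (Gf μ m) l) with hr
  have h_level : Integrable (fun x => (r + gfun m (l * x)) / l) μ :=
    ((integrable_const r).add h_gfun).div_const l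
  unfold levelExcess
  rw [integral_sub h_level (integrable_mul_two_mul_tiltProb_sub hm hμ_int l), integral_div,
    integral_add (integrable_const _) h_gfun, integral_const, probReal_univ, one_smul,
    hr, Gstar_deriv_Gf hm hμ_int, ← (hasDerivAt_Gf hm hμ_int l).deriv, Gf]
  field_simp
  ring

theorem abs_levelExcess_le (hm : m ∈ Ioo (-1) 1) {l : ℝ} (hl : 0 < l) (r x : ℝ) :
    |levelExcess m r l x| ≤ |r| / l + 4 * |x| := by
  have h_gfun : |(r + gfun m (l * x)) / l| ≤ |r| / l + 2 * |x| := by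
    rw [abs_div, abs_of_pos hl, div_le_iff₀ hl, add_mul, div_mul_cancel₀ _ hl.ne']
    have h_le := abs_gfun_le hm (l * x)
    rw [abs_mul, abs_of_pos hl] at h_le
    linarith [abs_add_le r (gfun m (l * x))]
  unfold levelExcess
  linarith [abs_sub ((r + gfun m (l * x)) / l) (x * (2 * tiltProb m (l * x) - 1 - m)),
    abs_mul_two_mul_tiltProb_sub_le hm l x]

theorem memLp_levelExcess [IsFiniteMeasure μ] (hm : m ∈ Ioo (-1) 1) {l : ℝ} (hl : 0 < l) (r : ℝ)
    {q : ℝ≥0∞} (hμ_mem : MemLp (fun x => x) q μ) : MemLp (levelExcess m r l) q μ := by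
  have h_bound : MemLp (fun x => |r| / l + 4 * |x|) q μ :=
    (memLp_const (|r| / l)).add (hμ_mem.abs.const_mul 4)
  refine h_bound.mono (continuous_levelExcess hm r l).aestronglyMeasurable (.of_forall fun x => ?_)
  exact (abs_levelExcess_le hm hl r x).trans (le_abs_self _)

end SaddlePoint

section IIDSum

variable {Ω : Type*} [MeasurableSpace Ω] {P : Measure Ω} [IsProbabilityMeasure P] {X : ℕ → Ω → ℝ}
  {μ : Measure ℝ} {ξ : ℝ → ℝ}

theorem IsIID.measure_le_abs_sum_le (hX : IsIID P X μ) (hξ_meas : Measurable ξ)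
    (hξ_mem : MemLp ξ 2 μ) (hξ_mean : ∫ x, ξ x ∂μ = 0) {n : ℕ} (hn : n ≠ 0) {B : ℝ} (hB : 0 < B) :
    P {ω | B * √n ≤ |∑ i : Fin n, ξ (X i ω)|} ≤ ENNReal.ofReal (Var[ξ; μ] / B ^ 2) := by
  have hn_pos : (0 : ℝ) < n := by positivity
  have h_mem (i : Fin n) : MemLp (fun ω => ξ (X i ω)) 2 P :=
    (hX.map_eq i ▸ hξ_mem).comp_of_map (hX.measurable i).aemeasurable
  have h_mean : ∫ ω, ∑ i : Fin n, ξ (X i ω) ∂P = 0 := by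
    rw [integral_finsetSum _ fun i _ => (h_mem i).integrable one_le_two]
    exact Finset.sum_eq_zero fun i _ => (hX.integral_comp hξ_mem.1 i).trans hξ_mean
  have h_var : Var[fun ω => ∑ i : Fin n, ξ (X i ω); P] = n * Var[ξ; μ] := by
    have h_indep := hX.iIndepFun.comp (fun _ => ξ) fun _ => hξ_meas
    have h_var_comp (i : ℕ) : Var[fun ω => ξ (X i ω); P] = Var[ξ; μ] := by
      rw [← hX.map_eq i, variance_map hξ_meas.aemeasurable (hX.measurable i).aemeasurable]
      rfl
    rw [← Finset.sum_fn, IndepFun.variance_sum (fun i _ => h_mem i)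
      fun i _ j _ hij => h_indep.indepFun (Fin.val_injective.ne hij)]
    simp only [h_var_comp, Finset.sum_const, Finset.card_univ, Fintype.card_fin, nsmul_eq_mul]
  have h_chebyshev := meas_ge_le_variance_div_sq (memLp_finsetSum Finset.univ fun i _ => h_mem i)
    (mul_pos hB (sqrt_pos.2 hn_pos))
  rw [h_mean, h_var, mul_pow, sq_sqrt hn_pos.le, mul_comm (n : ℝ),
    mul_div_mul_right _ _ hn_pos.ne'] at h_chebyshev
  simpa only [sub_zero] using h_chebyshev

theorem IsIID.exists_measure_le_abs_sum_le (hX : IsIID P X μ) (hξ_meas : Measurable ξ)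
    (hξ_mem : MemLp ξ 2 μ) (hξ_mean : ∫ x, ξ x ∂μ = 0) {ε : ℝ≥0∞} (hε : 0 < ε) :
    ∃ B : ℝ, ∀ n : ℕ, n ≠ 0 → P {ω | B * √n ≤ |∑ i : Fin n, ξ (X i ω)|} ≤ ε := by
  have h_lim : Tendsto (fun B : ℝ => ENNReal.ofReal (Var[ξ; μ] / B ^ 2)) atTop (𝓝 0) :=
    ENNReal.ofReal_zero ▸ ENNReal.tendsto_ofReal
      (tendsto_const_nhds.div_atTop (tendsto_pow_atTop two_ne_zero))
  obtain ⟨B, hB_le, hB⟩ :=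
    ((ENNReal.tendsto_nhds_zero.1 h_lim ε hε).and (eventually_gt_atTop 0)).exists
  exact ⟨B, fun n hn => (hX.measure_le_abs_sum_le hξ_meas hξ_mem hξ_mean hn hB).trans hB_le⟩

end IIDSum

/-! ### The random centring -/

/-- The distance from the quenched mean of the tilted energy to the level at which the Gaussian
first moment `exp (n * r + ∑ i, gfun m (l * x i) - l * A) / √(2 * π * n * v)` equals `1`. -/
def levelShift (m r l v : ℝ) (n : ℕ) (x : ℕ → ℝ) : ℝ :=
  (∑ i : Fin n, levelExcess m r l (x i)) - log (2 * π * n * v) / (2 * l)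

/-- The centring `A_n(h)` of the energies. The quadratic correction compensates the Gaussian density
`exp (-(levelShift ^ 2) / (2 * n * v))` at the level reached by `levelShift`. -/
def levelCentring (m r l v : ℝ) (n : ℕ) (x : ℕ → ℝ) : ℝ :=
  quenchedMean m (fun y => tiltProb m (l * y)) n x + levelShift m r l v n x -
    levelShift m r l v n x ^ 2 / (2 * n * v * l)

section Centring

variable {m l v : ℝ}

theorem continuous_levelCentring (hm : m ∈ Ioo (-1) 1) (r l v : ℝ) (n : ℕ) :
    Continuous (levelCentring m r l v n) := by
  have h_tilt := continuous_tiltProb hm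
  have h_mean : Continuous (quenchedMean m (fun y => tiltProb m (l * y)) n) :=
    continuous_quenchedMean (by fun_prop)
  have h_excess := continuous_levelExcess hm r l
  unfold levelCentring levelShift
  fun_prop

theorem nat_mul_add_sum_gfun_eq (hl : l ≠ 0) (m r v : ℝ) (n : ℕ) (x : ℕ → ℝ) :
    n * r + ∑ i : Fin n, gfun m (l * x i) =
      l * (quenchedMean m (fun y => tiltProb m (l * y)) n x + levelShift m r l v n x) +
        log (2 * π * n * v) / 2 := by
  simp only [levelShift, quenchedMean, levelExcess, Finset.sum_sub_distrib, ← Finset.sum_div,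
    Finset.sum_add_distrib, Finset.sum_const, Finset.card_univ, Fintype.card_fin, nsmul_eq_mul]
  field_simp
  ring

theorem sum_Qw_mul_sub_levelCentring_eq (hm : m ∈ Ioo (-1) 1) (hl : l ≠ 0) (hv : 0 < v) (ρ : ℝ)
    {n : ℕ} (hn : n ≠ 0) (x : ℕ → ℝ) (φ : ℝ → ℝ) {r D A : ℝ}
    (hr : r = ρ * (log 2 - log (1 + |m|))) (hD : D = levelShift m r l v n x)
    (hA : A = levelCentring m r l v n x) :
    ∑ τ : Fin n → Bool, Qw m ρ n τ * φ (Hn m n x τ - A) =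
      exp (D ^ 2 / (2 * n * v)) *
        (lltError m (fun y => tiltProb m (l * y)) v n x A (fun y => φ y * exp (-(l * y))) +
          exp (-((D - D ^ 2 / (2 * n * v * l)) ^ 2 / (2 * n * v))) *
            ∫ y, φ y * exp (-(l * y))) := by
  have : (0 : ℝ) < n := by positivity
  have h_sqrt : √(2 * π * n * v) = exp (log (2 * π * n * v) / 2) := by
    rw [exp_half, exp_log (by positivity)]
  have h_level : A = quenchedMean m (fun y => tiltProb m (l * y)) n x + D -
      D ^ 2 / (2 * n * v * l) := by rw [hA, hD, levelCentring]
  have h_prefactor : exp (n * r + (∑ i : Fin n, gfun m (l * x i)) - l * A) =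
      exp (D ^ 2 / (2 * n * v)) * √(2 * π * n * v) := by
    rw [h_sqrt, ← exp_add, nat_mul_add_sum_gfun_eq hl m r v n x, ← hD, h_level]
    congr 1
    field_simp
    ring
  have h_diff : A - quenchedMean m (fun y => tiltProb m (l * y)) n x =
      D - D ^ 2 / (2 * n * v * l) := by rw [h_level]; ring
  rw [sum_Qw_mul_eq hm ρ l, ← hr, h_prefactor, lltError, h_diff]
  ring

theorem sq_div_natCast_mul_le (hv : 0 < v) {n : ℕ} (hn : n ≠ 0) {B D : ℝ} (hD : |D| ≤ B * √n) :
    D ^ 2 / (n * v) ≤ B ^ 2 / v := by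
  have hn_pos : (0 : ℝ) < n := by positivity
  have h_sq : D ^ 2 ≤ B ^ 2 * n := by
    rw [← sq_abs, ← sq_sqrt hn_pos.le, ← mul_pow]
    gcongr
  rw [← div_div]
  gcongr
  exact (div_le_iff₀ hn_pos).2 h_sq

theorem abs_sq_sub_sub_sq_le {B D E e s : ℝ} (hs : 1 ≤ s) (hD : |D| ≤ B * s) (hE : E ∈ Icc 0 e) :
    |D ^ 2 - (D - E) ^ 2| ≤ s * (2 * B * e + e ^ 2) := by
  have hBs : 0 ≤ B * s := (abs_nonneg D).trans hD
  calc |D ^ 2 - (D - E) ^ 2| = |2 * D * E - E ^ 2| := by ring_nf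
    _ ≤ |2 * D * E| + |E ^ 2| := abs_sub _ _
    _ = 2 * |D| * E + E ^ 2 := by
      rw [abs_mul, abs_mul, abs_of_nonneg hE.1, abs_of_nonneg (sq_nonneg E), abs_two]
    _ ≤ 2 * (B * s) * e + e ^ 2 := by gcongr; exacts [hE.1, hE.2, hE.1, hE.2]
    _ ≤ s * (2 * B * e + e ^ 2) := by nlinarith [sq_nonneg e]

/-- The quadratic correction in `levelCentring` is bounded, so it perturbs the Gaussian exponent
only through the cross term, which is of order `1 / √n`. -/
theorem abs_sq_sub_sub_sq_div_le (hl : 0 < l) (hv : 0 < v) {n : ℕ} (hn : n ≠ 0) {B D : ℝ}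
    (hD : |D| ≤ B * √n) :
    |(D ^ 2 - (D - D ^ 2 / (2 * n * v * l)) ^ 2) / (2 * n * v)| ≤
      (2 * B * (B ^ 2 / (2 * v * l)) + (B ^ 2 / (2 * v * l)) ^ 2) / (2 * v) / √n := by
  have h_one_le : 1 ≤ √(n : ℝ) := one_le_sqrt.2 (Nat.one_le_cast.2 (Nat.one_le_iff_ne_zero.2 hn))
  have hn_pos : (0 : ℝ) < n := by positivity
  have h_correction : D ^ 2 / (2 * n * v * l) ∈ Icc 0 (B ^ 2 / (2 * v * l)) := by
    refine ⟨by positivity, ?_⟩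
    rw [show 2 * n * v * l = n * (2 * v * l) by ring]
    exact sq_div_natCast_mul_le (by positivity) hn hD
  rw [abs_div, abs_of_pos (by positivity : 0 < 2 * n * v), div_le_iff₀ (by positivity)]
  refine (abs_sq_sub_sub_sq_le h_one_le hD h_correction).trans_eq ?_
  nth_rw 3 [← mul_self_sqrt hn_pos.le]
  field_simp

theorem exists_abs_exp_mul_exp_neg_sub_one_le (hl : 0 < l) (hv : 0 < v) (B : ℝ) :
    ∃ κ : ℝ, ∀ᶠ n : ℕ in atTop, ∀ D, |D| ≤ B * √n →
      |exp (D ^ 2 / (2 * n * v)) * exp (-((D - D ^ 2 / (2 * n * v * l)) ^ 2 / (2 * n * v))) - 1| ≤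
        κ / √n := by
  set κ := (2 * B * (B ^ 2 / (2 * v * l)) + (B ^ 2 / (2 * v * l)) ^ 2) / (2 * v)
  refine ⟨2 * κ, ?_⟩
  filter_upwards [eventually_ne_atTop 0,
    (tendsto_const_div_sqrt_natCast κ).eventually_le_const one_pos] with n hn h_le_one D hD
  have h_exponent := abs_sq_sub_sub_sq_div_le hl hv hn hD
  rw [← exp_add, ← sub_eq_add_neg, ← sub_div, mul_div_assoc]
  exact (abs_exp_sub_one_le (h_exponent.trans h_le_one)).trans
    (mul_le_mul_of_nonneg_left h_exponent two_pos.le)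

theorem eventually_abs_log_mul_natCast_le {c δ : ℝ} (hc : 0 < c) (hδ : 0 < δ) :
    ∀ᶠ n : ℕ in atTop, |log (c * n)| ≤ δ * √n := by
  have h_littleO := (isLittleO_log_rpow_atTop one_half_pos).comp_tendsto
    (tendsto_natCast_atTop_atTop.const_mul_atTop hc)
  filter_upwards [h_littleO.bound (c := δ / √c) (by positivity)] with n hn
  simp only [Function.comp_apply, norm_eq_abs] at hn
  rw [← sqrt_eq_rpow, abs_of_nonneg (sqrt_nonneg _), sqrt_mul hc.le] at hn
  have hc_sqrt : √c ≠ 0 := (sqrt_pos.2 hc).ne'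
  calc |log (c * n)| ≤ δ / √c * (√c * √n) := hn
    _ = δ * √n := by field_simp

theorem eventually_abs_levelShift_le (hl : 0 < l) (hv : 0 < v) (m r B : ℝ) :
    ∀ᶠ n : ℕ in atTop, ∀ x : ℕ → ℝ, |∑ i : Fin n, levelExcess m r l (x i)| ≤ B * √n →
      |levelShift m r l v n x| ≤ (B + 1) * √n := by
  filter_upwards [eventually_abs_log_mul_natCast_le (by positivity : 0 < 2 * π * v)
    (by positivity : 0 < 2 * l)] with n h_log x hx
  have h_correction : |log (2 * π * n * v) / (2 * l)| ≤ √n := by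
    rw [abs_div, abs_of_pos (by positivity : 0 < 2 * l), div_le_iff₀' (by positivity),
      mul_right_comm]
    exact h_log
  unfold levelShift
  linarith [abs_sub (∑ i : Fin n, levelExcess m r l (x i)) (log (2 * π * n * v) / (2 * l))]

theorem exists_abs_sum_Qw_mul_sub_integral_le (hm : m ∈ Ioo (-1) 1) (hl : 0 < l) (hv : 0 < v)
    {ρ r : ℝ} (hr : r = ρ * (log 2 - log (1 + |m|))) (B : ℝ) :
    ∃ K κ : ℝ, ∀ᶠ n : ℕ in atTop, ∀ x : ℕ → ℝ,
      |∑ i : Fin n, levelExcess m r l (x i)| ≤ B * √n → ∀ φ : ℝ → ℝ,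
        |∑ τ : Fin n → Bool, Qw m ρ n τ * φ (Hn m n x τ - levelCentring m r l v n x) -
            ∫ y, φ y * exp (-(l * y))| ≤
          κ / √n * |∫ y, φ y * exp (-(l * y))| +
          K * |lltError m (fun y => tiltProb m (l * y)) v n x (levelCentring m r l v n x)
            fun y => φ y * exp (-(l * y))| := by
  obtain ⟨κ, hκ⟩ := exists_abs_exp_mul_exp_neg_sub_one_le hl hv (B + 1)
  refine ⟨exp ((B + 1) ^ 2 / (2 * v)), κ, ?_⟩
  filter_upwards [hκ, eventually_ne_atTop 0, eventually_abs_levelShift_le hl hv m r B]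
    with n hκ_le hn h_shift x hx φ
  rw [sum_Qw_mul_sub_levelCentring_eq hm hl.ne' hv ρ hn x φ hr rfl rfl]
  set D := levelShift m r l v n x
  set I := ∫ y, φ y * exp (-(l * y))
  set δ := lltError m (fun y => tiltProb m (l * y)) v n x (levelCentring m r l v n x)
    fun y => φ y * exp (-(l * y))
  set R := exp (-((D - D ^ 2 / (2 * n * v * l)) ^ 2 / (2 * n * v)))
  have hD : |D| ≤ (B + 1) * √n := h_shift x hx
  have h_weight : exp (D ^ 2 / (2 * n * v)) ≤ exp ((B + 1) ^ 2 / (2 * v)) := by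
    rw [show 2 * n * v = n * (2 * v) by ring]
    exact exp_le_exp.2 (sq_div_natCast_mul_le (by positivity) hn hD)
  calc |exp (D ^ 2 / (2 * n * v)) * (δ + R * I) - I|
      = |(exp (D ^ 2 / (2 * n * v)) * R - 1) * I + exp (D ^ 2 / (2 * n * v)) * δ| := by ring_nf
    _ ≤ |exp (D ^ 2 / (2 * n * v)) * R - 1| * |I| + exp (D ^ 2 / (2 * n * v)) * |δ| := by
        rw [← abs_mul, ← abs_of_pos (exp_pos (D ^ 2 / (2 * n * v))), ← abs_mul, abs_exp]
        exact abs_add_le _ _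
    _ ≤ κ / √n * |I| + exp ((B + 1) ^ 2 / (2 * v)) * |δ| := by
        gcongr
        exact hκ_le D hD

end Centring

/-! ### Convergence of the Laplace functional -/

theorem abs_exp_neg_sub_exp_neg_le {a b : ℝ} (ha : 0 ≤ a) (hb : 0 ≤ b) :
    |exp (-a) - exp (-b)| ≤ |a - b| := by
  wlog hab : a ≤ b generalizing a b
  · rw [abs_sub_comm, abs_sub_comm a]
    exact this hb ha (le_of_not_ge hab)
  rw [abs_of_nonneg (sub_nonneg.2 (exp_le_exp.2 (neg_le_neg hab))), abs_sub_comm,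
    abs_of_nonneg (sub_nonneg.2 hab)]
  calc exp (-a) - exp (-b) = exp (-a) * (1 - exp (-(b - a))) := by
        rw [mul_sub, ← exp_add]
        ring_nf
    _ ≤ 1 * (b - a) :=
        mul_le_mul (exp_le_one_iff.2 (neg_nonpos.2 ha)) (by linarith [one_sub_le_exp_neg (b - a)])
          (sub_nonneg.2 (exp_le_one_iff.2 (neg_nonpos.2 (sub_nonneg.2 hab)))) zero_le_one
    _ = b - a := one_mul _

theorem abs_prod_one_sub_sub_exp_neg_le {ι : Type*} [Fintype ι] {x : ι → ℝ} {q I : ℝ}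
    (hx : ∀ i, x i ∈ Icc 0 q) (hq : q ∈ Ico 0 1) (hI : 0 ≤ I) :
    |∏ i, (1 - x i) - exp (-I)| ≤ q / (1 - q) + |∑ i, x i - I| :=
  (abs_sub_le _ (exp (-∑ i, x i)) _).trans <|
    add_le_add (abs_prod_one_sub_sub_exp_neg_sum_le hx hq)
      (abs_exp_neg_sub_exp_neg_le (Finset.sum_nonneg fun i _ => (hx i).1) hI)

section ConvergenceOfIntegrals

variable {Ω : Type*} [MeasurableSpace Ω] {P : Measure Ω} [IsProbabilityMeasure P]

theorem lintegral_enorm_le_of_abs_le_off {F δ : Ω → ℝ} (hF : ∀ ω, |F ω| ≤ 1) (hδ : Measurable δ)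
    {s : Set Ω} {a K : ℝ} (h_off : ∀ ω ∉ s, |F ω| ≤ a + K * |δ ω|) :
    ∫⁻ ω, ‖F ω‖ₑ ∂P ≤ P s + (ENNReal.ofReal a + ENNReal.ofReal K * ∫⁻ ω, ‖δ ω‖ₑ ∂P) := by
  have h_meas : Measurable fun ω => ENNReal.ofReal a + ENNReal.ofReal K * ‖δ ω‖ₑ := by fun_prop
  have h_le (ω : Ω) : ‖F ω‖ₑ ≤
      s.indicator 1 ω + (ENNReal.ofReal a + ENNReal.ofReal K * ‖δ ω‖ₑ) := by
    by_cases hω : ω ∈ s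
    · rw [indicator_of_mem hω, enorm_eq_ofReal_abs]
      exact (ENNReal.ofReal_le_one.2 (hF ω)).trans le_self_add
    · rw [indicator_of_notMem hω, zero_add, enorm_eq_ofReal_abs, enorm_eq_ofReal_abs,
        ← ENNReal.ofReal_mul' (abs_nonneg _)]
      exact (ENNReal.ofReal_le_ofReal (h_off ω hω)).trans ENNReal.ofReal_add_le
  calc ∫⁻ ω, ‖F ω‖ₑ ∂P
      ≤ ∫⁻ ω, (s.indicator 1 ω + (ENNReal.ofReal a + ENNReal.ofReal K * ‖δ ω‖ₑ)) ∂P :=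
        lintegral_mono h_le
    _ = ∫⁻ ω, s.indicator 1 ω ∂P +
          (ENNReal.ofReal a + ENNReal.ofReal K * ∫⁻ ω, ‖δ ω‖ₑ ∂P) := by
        rw [lintegral_add_right _ h_meas, lintegral_add_left measurable_const, lintegral_const,
          measure_univ, mul_one, lintegral_const_mul _ hδ.enorm]
    _ ≤ P s + (ENNReal.ofReal a + ENNReal.ofReal K * ∫⁻ ω, ‖δ ω‖ₑ ∂P) := by
        gcongr
        exact lintegral_indicator_one_le s

theorem tendsto_integral_of_abs_sub_le_off {Φ δ : ℕ → Ω → ℝ} {c : ℝ}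
    (hΦ_int : ∀ n, Integrable (Φ n) P) (hΦ : ∀ n ω, |Φ n ω - c| ≤ 1) (hδ : ∀ n, Measurable (δ n))
    (hδ_lim : Tendsto (fun n => ∫⁻ ω, ‖δ n ω‖ₑ ∂P) atTop (𝓝 0))
    (h_off : ∀ ε : ℝ≥0∞, 0 < ε → ∃ (s : ℕ → Set Ω) (a : ℕ → ℝ) (K : ℝ), Tendsto a atTop (𝓝 0) ∧
      ∀ᶠ n in atTop, P (s n) ≤ ε ∧ ∀ ω ∉ s n, |Φ n ω - c| ≤ a n + K * |δ n ω|) :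
    Tendsto (fun n => ∫ ω, Φ n ω ∂P) atTop (𝓝 c) := by
  rw [tendsto_iff_edist_tendsto_0, ENNReal.tendsto_nhds_zero]
  intro ε hε
  obtain ⟨s, a, K, ha, hs⟩ := h_off (ε / 2) (ENNReal.half_pos hε.ne')
  have h_lim : Tendsto (fun n => ENNReal.ofReal (a n) + ENNReal.ofReal K * ∫⁻ ω, ‖δ n ω‖ₑ ∂P)
      atTop (𝓝 0) := by
    have h_const := ENNReal.tendsto_ofReal ha
    have h_error := ENNReal.Tendsto.const_mul hδ_lim (Or.inr (ENNReal.ofReal_ne_top (r := K)))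
    simpa only [ENNReal.ofReal_zero, mul_zero, add_zero] using h_const.add h_error
  filter_upwards [hs, ENNReal.tendsto_nhds_zero.1 h_lim (ε / 2) (ENNReal.half_pos hε.ne')]
    with n ⟨hs_le, hs_off⟩ h_rest
  calc edist (∫ ω, Φ n ω ∂P) c = ‖∫ ω, (Φ n ω - c) ∂P‖ₑ := by
        rw [integral_sub (hΦ_int n) (integrable_const _), integral_const, probReal_univ, one_smul,
          edist_eq_enorm_sub]
    _ ≤ ∫⁻ ω, ‖Φ n ω - c‖ₑ ∂P := enorm_integral_le_lintegral_enorm _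
    _ ≤ P (s n) + (ENNReal.ofReal (a n) + ENNReal.ofReal K * ∫⁻ ω, ‖δ n ω‖ₑ ∂P) :=
        lintegral_enorm_le_of_abs_le_off (hΦ n) (hδ n) hs_off
    _ ≤ ε / 2 + ε / 2 := add_le_add hs_le h_rest
    _ = ε := ENNReal.add_halves ε

end ConvergenceOfIntegrals

/-- The Laplace functional, conditionally on the fields `x`, of the thinned point process of the
energies `Hn m n x τ - A`, evaluated at `f` with `φ = 1 - exp (-f)`. -/
def thinnedLaplace (m ρ : ℝ) (n : ℕ) (x : ℕ → ℝ) (A : ℝ) (φ : ℝ → ℝ) : ℝ :=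
  ∏ τ : Fin n → Bool, (1 - Qw m ρ n τ * φ (Hn m n x τ - A))

section ThinnedLaplace

variable {m ρ l v : ℝ} {n : ℕ} {φ : ℝ → ℝ}

theorem continuous_thinnedLaplace (hφ_cont : Continuous φ) :
    Continuous fun z : (ℕ → ℝ) × ℝ => thinnedLaplace m ρ n z.1 z.2 φ := by
  have h_energy (τ : Fin n → Bool) : Continuous fun x => Hn m n x τ := continuous_Hn τ
  unfold thinnedLaplace
  fun_prop

theorem Qw_mul_mem_Icc (hm : m ∈ Ioo (-1) 1) (hφ : ∀ y, φ y ∈ Icc 0 1) (τ : Fin n → Bool) (y : ℝ) :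
    Qw m ρ n τ * φ y ∈ Icc 0 (thinningRate m ρ ^ n) :=
  have h_Qw := Qw_mem_Icc hm τ
  ⟨mul_nonneg h_Qw.1 (hφ y).1, (mul_le_of_le_one_right h_Qw.1 (hφ y).2).trans h_Qw.2⟩

theorem thinnedLaplace_mem_Icc (hm : m ∈ Ioo (-1) 1) (hρ : ρ < 1) (hφ : ∀ y, φ y ∈ Icc 0 1)
    (x : ℕ → ℝ) (A : ℝ) : thinnedLaplace m ρ n x A φ ∈ Icc 0 1 := by
  have h_rate := thinningRate_mem_Ioo hm hρ
  have h_mem (τ : Fin n → Bool) : Qw m ρ n τ * φ (Hn m n x τ - A) ∈ Icc 0 1 :=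
    Icc_subset_Icc_right (pow_le_one₀ h_rate.1.le h_rate.2.le) (Qw_mul_mem_Icc hm hφ τ _)
  exact ⟨Finset.prod_nonneg fun τ _ => sub_nonneg.2 (h_mem τ).2,
    Finset.prod_le_one (fun τ _ => sub_nonneg.2 (h_mem τ).2) fun τ _ => sub_le_self 1 (h_mem τ).1⟩

theorem integral_exp_neg_sum_ite_le_Qw (hm : m ∈ Ioo (-1) 1) (hρ : ρ < 1) (f : ℝ → ℝ) (x : ℕ → ℝ)
    (A : ℝ) :
    ∫ u, exp (-(∑ τ : Fin n → Bool, if u τ ≤ Qw m ρ n τ then f (Hn m n x τ - A) else 0)) ∂(Unif n) =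
      thinnedLaplace m ρ n x A fun y => 1 - exp (-(f y)) := by
  have h_rate := thinningRate_mem_Ioo hm hρ
  exact integral_exp_neg_sum_ite_le_uniform (fun τ =>
    Icc_subset_Icc_right (pow_le_one₀ h_rate.1.le h_rate.2.le) (Qw_mem_Icc hm τ)) _

theorem exists_abs_thinnedLaplace_sub_le (hm : m ∈ Ioo (-1) 1) (hρ : ρ < 1) (hl : 0 < l)
    (hv : 0 < v) {r : ℝ} (hr : r = ρ * (log 2 - log (1 + |m|))) (hφ : ∀ y, φ y ∈ Icc 0 1) (B : ℝ) :
    ∃ (a : ℕ → ℝ) (K : ℝ), Tendsto a atTop (𝓝 0) ∧ ∀ᶠ n : ℕ in atTop, ∀ x : ℕ → ℝ,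
      |∑ i : Fin n, levelExcess m r l (x i)| ≤ B * √n →
        |thinnedLaplace m ρ n x (levelCentring m r l v n x) φ - exp (-∫ y, φ y * exp (-(l * y)))| ≤
          a n + K * |lltError m (fun y => tiltProb m (l * y)) v n x (levelCentring m r l v n x)
            fun y => φ y * exp (-(l * y))| := by
  have h_rate := thinningRate_mem_Ioo hm hρ
  set I := ∫ y, φ y * exp (-(l * y))
  have hI_nonneg : 0 ≤ I := integral_nonneg fun y => mul_nonneg (hφ y).1 (exp_pos _).le
  obtain ⟨K, κ, h_sum⟩ := exists_abs_sum_Qw_mul_sub_integral_le hm hl hv hr B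
  refine ⟨fun n => thinningRate m ρ ^ n / (1 - thinningRate m ρ ^ n) + κ / √n * |I|, K, ?_, ?_⟩
  · have h_pow := tendsto_pow_atTop_nhds_zero_of_lt_one h_rate.1.le h_rate.2
    have h_ratio : Tendsto (fun n => thinningRate m ρ ^ n / (1 - thinningRate m ρ ^ n)) atTop
        (𝓝 (0 / (1 - 0))) := h_pow.div (h_pow.const_sub 1) (by norm_num)
    simpa only [zero_div, zero_mul, add_zero] using
      h_ratio.add ((tendsto_const_div_sqrt_natCast κ).mul_const |I|)
  · filter_upwards [h_sum, eventually_ne_atTop 0] with n h_sum_le hn x hx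
    have h_pow : thinningRate m ρ ^ n ∈ Ico 0 1 :=
      ⟨pow_nonneg h_rate.1.le n, pow_lt_one₀ h_rate.1.le h_rate.2 hn⟩
    have h_poisson := abs_prod_one_sub_sub_exp_neg_le
      (fun τ => Qw_mul_mem_Icc hm hφ τ (Hn m n x τ - levelCentring m r l v n x)) h_pow hI_nonneg
    rw [thinnedLaplace]
    linarith [h_sum_le x hx φ]

end ThinnedLaplace

section LaplaceLimit

variable {Ω : Type*} [MeasurableSpace Ω] {P : Measure Ω} [IsProbabilityMeasure P] {X : ℕ → Ω → ℝ}
  {μ : Measure ℝ}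

theorem IsIID.tendsto_integral_thinnedLaplace (hX : IsIID P X μ) (hμ : DominatesLebesgueOnIcc μ)
    (hμ_sq : Integrable (fun x => x ^ 2) μ) {m ρ l r v : ℝ} (hm : m ∈ Ioo (-1) 1) (hρ : ρ < 1)
    (hl : 0 < l) (hr : r = ρ * (log 2 - log (1 + |m|))) (hG : Gstar μ m (deriv (Gf μ m) l) = r)
    (hv : v = quenchedVar (fun y => tiltProb m (l * y)) μ) {φ : ℝ → ℝ} (hφ_cont : Continuous φ)
    (hφ_supp : HasCompactSupport φ) (hφ : ∀ y, φ y ∈ Icc 0 1) :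
    Tendsto (fun n => ∫ ω, thinnedLaplace m ρ n (fun i => X i ω)
      (levelCentring m r l v n fun i => X i ω) φ ∂P) atTop
      (𝓝 (exp (-∫ y, φ y * exp (-(l * y))))) := by
  have := hX.isProbabilityMeasure
  have h_tilt := continuous_tiltProb hm
  have hp_cont : Continuous fun y => tiltProb m (l * y) := by fun_prop
  have hp (y : ℝ) : tiltProb m (l * y) ∈ Ioo 0 1 := tiltProb_mem_Ioo hm _
  have hv_pos : 0 < v := hv ▸ quenchedVar_pos hp_cont hp hμ hμ_sq
  have hψ_cont : Continuous fun y => φ y * exp (-(l * y)) := by fun_prop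
  have hA (n : ℕ) : Measurable fun ω => levelCentring m r l v n fun i => X i ω :=
    (continuous_levelCentring hm r l v n).measurable.comp hX.measurable_pi
  have h_llt := hX.tendsto_lintegral_enorm_lltError hμ hμ_sq hp_cont hp m hA hψ_cont
    hφ_supp.mul_right
  rw [← hv] at h_llt
  have h_mem (n : ℕ) (x : ℕ → ℝ) (A : ℝ) : thinnedLaplace m ρ n x A φ ∈ Icc 0 1 :=
    thinnedLaplace_mem_Icc hm hρ hφ x A
  have h_limit : exp (-∫ y, φ y * exp (-(l * y))) ∈ Icc 0 1 :=
    ⟨(exp_pos _).le, exp_le_one_iff.2 <| neg_nonpos.2 <|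
      integral_nonneg fun y => mul_nonneg (hφ y).1 (exp_pos _).le⟩
  refine tendsto_integral_of_abs_sub_le_off (fun n => ?_)
    (fun n ω => abs_sub_le_of_nonneg_of_le (h_mem n _ _).1 (h_mem n _ _).2 h_limit.1 h_limit.2)
    (fun n => (continuous_lltError hp_cont hψ_cont).measurable.comp
      (hX.measurable_pi.prodMk (hA n))) h_llt fun ε hε => ?_
  · exact .of_mem_Icc 0 1 ((continuous_thinnedLaplace hφ_cont).measurable.comp
      (hX.measurable_pi.prodMk (hA n))).aemeasurable (.of_forall fun ω => h_mem n _ _)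
  · have hμ_mem : MemLp (fun x => x) 2 μ := (memLp_two_iff_integrable_sq (by fun_prop)).2 hμ_sq
    obtain ⟨B, hB⟩ := hX.exists_measure_le_abs_sum_le (continuous_levelExcess hm r l).measurable
      (memLp_levelExcess hm hl r hμ_mem)
      (hG ▸ integral_levelExcess hm (hμ_mem.integrable one_le_two) hl.ne') hε
    obtain ⟨a, K, ha, h_le⟩ := exists_abs_thinnedLaplace_sub_le hm hρ hl hv_pos hr hφ B
    refine ⟨fun n => {ω | B * √n ≤ |∑ i : Fin n, levelExcess m r l (X i ω)|}, a, K, ha, ?_⟩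
    filter_upwards [h_le, eventually_ne_atTop 0] with n h_le_n hn
    exact ⟨hB n hn, fun ω hω => h_le_n _ (not_le.1 hω).le⟩

end LaplaceLimit

theorem stmt0_general {Ω : Type*} [MeasurableSpace Ω] {P : Measure Ω} [IsProbabilityMeasure P]
    {X : ℕ → Ω → ℝ} {μ : Measure ℝ} (hX : IsIID P X μ) (hμ : DominatesLebesgueOnIcc μ)
    (hμ_sq : Integrable (fun x => x ^ 2) μ) {m ρ l : ℝ} (hm : m ∈ Ioo (-1) 1) (hρ : ρ < 1)
    (hl : 0 < l) (hG : Gstar μ m (deriv (Gf μ m) l) = ρ * (log 2 - log (1 + |m|))) :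
    ∃ A : ℕ → (ℕ → ℝ) → ℝ, (∀ n, Measurable (A n)) ∧
      ∀ f : ℝ → ℝ, Continuous f → HasCompactSupport f → (∀ x, 0 ≤ f x) →
        Tendsto (fun n => ∫ ω, (∫ u, exp (-(∑ τ : Fin n → Bool, if u τ ≤ Qw m ρ n τ then
            f (Hn m n (fun i => X i ω) τ - A n (fun i => X i ω)) else 0)) ∂(Unif n)) ∂P)
          atTop (𝓝 (exp (-(∫ x : ℝ, (1 - exp (-(f x))) * exp (-(l * x)))))) := by
  refine ⟨levelCentring m (ρ * (log 2 - log (1 + |m|))) l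
      (quenchedVar (fun y => tiltProb m (l * y)) μ),
    fun n => (continuous_levelCentring hm _ _ _ n).measurable, fun f hf_cont hf_supp hf => ?_⟩
  simp only [integral_exp_neg_sum_ite_le_Qw hm hρ f]
  refine hX.tendsto_integral_thinnedLaplace hμ hμ_sq hm hρ hl rfl hG rfl (by fun_prop)
    (hf_supp.comp_left (g := fun t => 1 - exp (-t)) (by simp)) fun y => ⟨?_, ?_⟩
  · exact sub_nonneg.2 (exp_le_one_iff.2 (neg_nonpos.2 (hf y)))
  · exact sub_le_self 1 (exp_pos _).le

/-- REM universality: with `G*(ã) = ρ(log 2 − log(1+|m|))`, `G'(λ̃) = ã`,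
there is an `h`-measurable centering `A_n` such that the Laplace functionals of the
thinned point process `𝐇_n` of the energies `H_n(h,σ) − A_n(h)` converge to the Laplace
functional of a Poisson point process with intensity `e^{−λ̃x}dx`. -/
theorem stmt0 {Ω : Type*} [MeasurableSpace Ω] (P : Measure Ω) [IsProbabilityMeasure P]
    (X : ℕ → Ω → ℝ) (hXmeas : ∀ i, Measurable (X i))
    (hXindep : iIndepFun X P)
    (μ : Measure ℝ) (hXdist : ∀ i, Measure.map (X i) P = μ)
    (hAss : Assumption1 μ) (m ρ : ℝ) (hm : m ∈ Set.Ioo (-1 : ℝ) 1)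
    (hρ : ρ ∈ Set.Ioo (0 : ℝ) 1)
    (atil ltil : ℝ) (hatil : atil ∈ Set.Ioo 0 (sigmaBar μ m)) (hltil : 0 < ltil)
    (hGstar : Gstar μ m atil = ρ * (Real.log 2 - Real.log (1 + |m|)))
    (hGderiv : deriv (Gf μ m) ltil = atil) :
    ∃ A : ℕ → (ℕ → ℝ) → ℝ, (∀ n, Measurable (A n)) ∧
      ∀ f : ℝ → ℝ, Continuous f → HasCompactSupport f → (∀ x, 0 ≤ f x) →
        Tendsto (fun n =>
            ∫ ω, (∫ u, Real.exp (-(∑ τ : Fin n → Bool,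
                if u τ ≤ Qw m ρ n τ then
                  f (Hn m n (fun i => X i ω) τ - A n (fun i => X i ω))
                else 0)) ∂(Unif n)) ∂P)
          atTop
          (nhds (Real.exp (-(∫ x : ℝ,
            (1 - Real.exp (-(f x))) * Real.exp (-(ltil * x)))))) :=
  stmt0_general ⟨hXmeas, hXindep, hXdist⟩ hAss.dominatesLebesgueOnIcc hAss.intSq hm hρ.2 hltil
    (hGderiv ▸ hGstar)
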